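/- arXiv:2510.06493 — 2 statements merged into one kernel-verified Lean document; each statement's English description precedes it below -/
import Mathlib

section
/- For every n ≥ 1, the set P_up(n) of upward patterns of size n occurring in the Sierpiński triangle T is finite and has exactly 4n² − 6n + 4 elements, i.e. A_n = 4n² − 6n + 4. -/
/-- Whether the unit triangle at row `r`, column `c` of the Sierpiński triangle is filled:
upward units `(r, 2j)` are filled iff `choose r j` is odd; downward units are unfilled. -/
def filled (r c : ℕ) : Bool :=
  decide (c % 2 = 0 ∧ Nat.choose r (c / 2) % 2 = 1)

/-- The upward pattern of size `n` at upward position `(r, c)`. -/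
def upPattern (n r c : ℕ) : ℕ × ℕ → Bool := fun q =>
  if q.1 < n ∧ q.2 ≤ 2 * q.1 then filled (r + q.1) (c + q.2) else false

/-- The set of all upward patterns of size `n` occurring in the Sierpiński triangle. -/
def Pup (n : ℕ) : Set (ℕ × ℕ → Bool) :=
  { p | ∃ r c : ℕ, c % 2 = 0 ∧ c ≤ 2 * r ∧ p = upPattern n r c }

/-- The downward pattern of size `n` at downward position `(r, c)`. -/
def downPattern (n r c : ℕ) : ℕ × ℕ → Bool := fun q =>
  if q.1 < n ∧ q.2 ≤ 2 * (n - 1 - q.1) then filled (r + q.1) (c + 2 * q.1 + q.2) else false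

/-- The set of all downward patterns of size `n` occurring in the Sierpiński triangle. -/
def Pdown (n : ℕ) : Set (ℕ × ℕ → Bool) :=
  { p | ∃ r c : ℕ, c % 2 = 1 ∧ c + 2 * (n - 1) ≤ 2 * r ∧ p = downPattern n r c }

/-- The top-cut pattern of size `n` at upward position `(r, c)` (apex unit removed). -/
def topCutPattern (n r c : ℕ) : ℕ × ℕ → Bool := fun q =>
  if 1 ≤ q.1 ∧ q.1 < n ∧ q.2 ≤ 2 * q.1 then filled (r + q.1) (c + q.2) else false

/-- The set of all top-cut patterns of size `n` occurring in the Sierpiński triangle. -/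
def PtopCut (n : ℕ) : Set (ℕ × ℕ → Bool) :=
  { p | ∃ r c : ℕ, c % 2 = 0 ∧ c ≤ 2 * r ∧ p = topCutPattern n r c }

/-- The bottom-cut pattern of size `n` at upward position `(r, c)`
(both bottom corner units removed). -/
def botCutPattern (n r c : ℕ) : ℕ × ℕ → Bool := fun q =>
  if (q.1 < n ∧ q.2 ≤ 2 * q.1) ∧ ¬(q.1 = n - 1 ∧ (q.2 = 0 ∨ q.2 = 2 * (n - 1)))
  then filled (r + q.1) (c + q.2) else false

/-- The set of all bottom-cut patterns of size `n` occurring in the Sierpiński triangle. -/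
def PbotCut (n : ℕ) : Set (ℕ × ℕ → Bool) :=
  { p | ∃ r c : ℕ, c % 2 = 0 ∧ c ≤ 2 * r ∧ p = botCutPattern n r c }

/-- The fully-cut pattern of size `n` at upward position `(r, c)`
(all three corner units removed). -/
def fullyCutPattern (n r c : ℕ) : ℕ × ℕ → Bool := fun q =>
  if (q.1 < n ∧ q.2 ≤ 2 * q.1) ∧ q ≠ (0, 0) ∧ ¬(q.1 = n - 1 ∧ (q.2 = 0 ∨ q.2 = 2 * (n - 1)))
  then filled (r + q.1) (c + q.2) else false

/-- The set of all fully-cut patterns of size `n` occurring in the Sierpiński triangle. -/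
def PfullyCut (n : ℕ) : Set (ℕ × ℕ → Bool) :=
  { p | ∃ r c : ℕ, c % 2 = 0 ∧ c ≤ 2 * r ∧ p = fullyCutPattern n r c }

/-- Upward patterns of size `m` occurring inside the approximation `T_N`
(rows `0, …, 2^N - 1`). -/
def PupN (N m : ℕ) : Set (ℕ × ℕ → Bool) :=
  { p | ∃ r c : ℕ, c % 2 = 0 ∧ c ≤ 2 * r ∧ r + m ≤ 2 ^ N ∧ p = upPattern m r c }

/-- Upward patterns of size `n` at positions with `r ≡ ρ [MOD 2]` and `c ≡ γ [MOD 4]`. -/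
def PupRC (n ρ γ : ℕ) : Set (ℕ × ℕ → Bool) :=
  { p | ∃ r c : ℕ, c % 2 = 0 ∧ c ≤ 2 * r ∧ r % 2 = ρ ∧ c % 4 = γ ∧ p = upPattern n r c }

/-- Downward patterns of size `n` at positions with `r ≡ ρ [MOD 2]` and `c ≡ γ [MOD 4]`. -/
def PdownRC (n ρ γ : ℕ) : Set (ℕ × ℕ → Bool) :=
  { p | ∃ r c : ℕ, c % 2 = 1 ∧ c + 2 * (n - 1) ≤ 2 * r ∧ r % 2 = ρ ∧ c % 4 = γ ∧
      p = downPattern n r c }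

/-- Top-cut patterns of size `n` at positions with `r ≡ ρ [MOD 2]` and `c ≡ γ [MOD 4]`. -/
def PtopCutRC (n ρ γ : ℕ) : Set (ℕ × ℕ → Bool) :=
  { p | ∃ r c : ℕ, c % 2 = 0 ∧ c ≤ 2 * r ∧ r % 2 = ρ ∧ c % 4 = γ ∧ p = topCutPattern n r c }

/-- Fully-cut patterns of size `n` at positions with `r ≡ ρ [MOD 2]` and `c ≡ γ [MOD 4]`. -/
def PfullyCutRC (n ρ γ : ℕ) : Set (ℕ × ℕ → Bool) :=
  { p | ∃ r c : ℕ, c % 2 = 0 ∧ c ≤ 2 * r ∧ r % 2 = ρ ∧ c % 4 = γ ∧ p = fullyCutPattern n r c }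

/-- The everywhere-unfilled upward pattern. -/
def blankUp : ℕ × ℕ → Bool := fun _ => false

/-- The upward pattern that is filled exactly at the apex `(0, 0)`. -/
def topUp : ℕ × ℕ → Bool := fun q => decide (q = (0, 0))

/-- The size-`N` upward pattern that is filled exactly at the bottom-left corner `(N-1, 0)`. -/
def botleftUp (N : ℕ) : ℕ × ℕ → Bool := fun q => decide (q = (N - 1, 0))

/-- The size-`N` upward pattern filled exactly at the bottom-right corner `(N-1, 2(N-1))`. -/
def botrightUp (N : ℕ) : ℕ × ℕ → Bool := fun q => decide (q = (N - 1, 2 * (N - 1)))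

/-- The everywhere-unfilled downward pattern. -/
def blankDown : ℕ × ℕ → Bool := fun _ => false

/-- The size-`N` downward pattern filled exactly at the upward units along the top side:
positions `(0, m)` with `m` odd, `1 ≤ m ≤ 2N - 3`. -/
def topsideDown (N : ℕ) : ℕ × ℕ → Bool := fun q =>
  decide (q.1 = 0 ∧ q.2 % 2 = 1 ∧ 1 ≤ q.2 ∧ q.2 ≤ 2 * N - 3)

/-- The size-`N` downward pattern filled exactly at the upward units along the left side:
positions `(k, 1)` with `0 ≤ k ≤ N - 2`. -/
def leftsideDown (N : ℕ) : ℕ × ℕ → Bool := fun q =>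
  decide (q.2 = 1 ∧ q.1 ≤ N - 2)

/-- The size-`N` downward pattern filled exactly at the upward units along the right side:
positions `(k, 2(N-1-k) - 1)` with `0 ≤ k ≤ N - 2`. -/
def rightsideDown (N : ℕ) : ℕ × ℕ → Bool := fun q =>
  decide (q.1 ≤ N - 2 ∧ q.2 = 2 * (N - 1 - q.1) - 1)

/-!
In barycentric coordinates, Lucas' theorem says that a cell is filled iff not all of its coordinates
are odd and the cell with halved coordinates is filled. Hence the patterns of a triangular window at
the positions of a fixed parity class (there are four) correspond bijectively to all the patterns of
a window of about half the size. This window is again a triangle, possibly with corner cells cut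
off, so we count patterns in all triangles of size `n` with `s` of the three corners cut.

Positions in different parity classes have the same parity in exactly one coordinate. If they show
the same pattern, sliding a filled cell along one of the other two coordinates inside its coarse
cell, at whichever of the two positions this is possible, shows that the pattern is empty or
consists of one whole side of the window, a cut corner or a single corner cell. The empty pattern
occurs in all four classes and each of the three sides in two of them, so the number of patterns
plus `3 + 3 * 1` is the sum of the numbers of patterns of the four coarse windows. This recursion is
solved by `4 * n ^ 2 - (6 + 4 * s) * n + 4 + 3 * s + s ^ 2`.
-/

namespace SierpinskiTriangle

theorem forall_fin_three {P : Fin 3 → Prop} : (∀ j, P j) ↔ P 0 ∧ P 1 ∧ P 2 := by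
  simp [Fin.forall_fin_succ]

theorem exists_fin_three {P : Fin 3 → Prop} : (∃ j, P j) ↔ P 0 ∨ P 1 ∨ P 2 := by
  simp [Fin.exists_fin_succ]

/-- The unit cells of the first `2 ^ N` rows are encoded by barycentric coordinates: the upward unit
of row `r` and column `2 * j` is `![2 ^ N - 1 - r, j, r - j]`, so the coordinates of a cell sum to
`2 ^ N - 1` and the three sides of the triangle play symmetric roles. This is the predicate that
the cell `x` is filled; it does not depend on `x 0`. -/
def IsFilled (x : Fin 3 → ℕ) : Prop :=
  Odd ((x 1 + x 2).choose (x 1))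

theorem isFilled_iff_half {x : Fin 3 → ℕ} (hx : (x 0 + x 1 + x 2) % 2 = 1) :
    IsFilled x ↔ (∃ j, x j % 2 = 0) ∧ IsFilled (fun j ↦ x j / 2) := by
  have lucas : (x 1 + x 2).choose (x 1) % 2 =
      (((x 1 + x 2) % 2).choose (x 1 % 2) * ((x 1 + x 2) / 2).choose (x 1 / 2)) % 2 :=
    Choose.choose_modEq_choose_mod_mul_choose_div_nat
  unfold IsFilled
  rw [Nat.odd_iff, lucas, ← Nat.odd_iff]
  rcases Nat.mod_two_eq_zero_or_one (x 1) with h₁ | h₁ <;>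
    rcases Nat.mod_two_eq_zero_or_one (x 2) with h₂ | h₂
  · rw [show (x 1 + x 2) % 2 = 0 by omega, show (x 1 + x 2) / 2 = x 1 / 2 + x 2 / 2 by omega, h₁]
    simpa using fun _ ↦ ⟨1, h₁⟩
  · rw [show (x 1 + x 2) % 2 = 1 by omega, show (x 1 + x 2) / 2 = x 1 / 2 + x 2 / 2 by omega, h₁]
    simpa using fun _ ↦ ⟨1, h₁⟩
  · rw [show (x 1 + x 2) % 2 = 1 by omega, show (x 1 + x 2) / 2 = x 1 / 2 + x 2 / 2 by omega, h₁]
    simpa using fun _ ↦ ⟨2, h₂⟩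
  · have all_odd : ∀ j, x j % 2 = 1 := by
      rw [forall_fin_three]
      omega
    rw [show (x 1 + x 2) % 2 = 0 by omega, h₁]
    simp [all_odd]

theorem not_isFilled_of_forall_odd {x : Fin 3 → ℕ} (hx : ∀ j, x j % 2 = 1) : ¬IsFilled x := by
  have h₀ := hx 0
  have h₁ := hx 1
  have h₂ := hx 2
  rw [isFilled_iff_half (by omega)]
  simp [hx]

theorem not_isFilled_of_forall_lt_two_pow {N : ℕ} {x : Fin 3 → ℕ}
    (hsum : x 0 + x 1 + x 2 + 1 = 2 ^ (N + 1)) (hx : ∀ j, x j < 2 ^ N) : ¬IsFilled x := by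
  induction N generalizing x with
  | zero =>
    rw [forall_fin_three] at hx
    omega
  | succ N ih =>
    rw [isFilled_iff_half (by omega)]
    rintro ⟨even, filled_half⟩
    rw [exists_fin_three] at even
    refine ih (by omega) (fun j ↦ ?_) filled_half
    have := hx j
    omega

theorem isFilled_of_eq_two_pow {N : ℕ} {x : Fin 3 → ℕ}
    (hsum : x 0 + x 1 + x 2 + 1 = 2 ^ (N + 1)) (hx : ∃ j, x j = 2 ^ N) : IsFilled x := by
  induction N generalizing x with
  | zero =>
    rw [exists_fin_three] at hx
    have : x 1 = 0 ∨ x 2 = 0 := by omega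
    rcases this with h | h <;> simp [IsFilled, h]
  | succ N ih =>
    obtain ⟨j, hj⟩ := hx
    have even : ∃ j, x j % 2 = 0 := ⟨j, by omega⟩
    refine (isFilled_iff_half (by omega)).2 ⟨even, ih ?_ ⟨j, by omega⟩⟩
    rw [exists_fin_three] at even
    omega

theorem isFilled_pascal (u : Fin 3 → ℕ) :
    IsFilled (u + ![0, 1, 1]) ↔ ¬(IsFilled (u + ![1, 0, 1]) ↔ IsFilled (u + ![1, 1, 0])) := by
  have pascal : (u 1 + 1 + (u 2 + 1)).choose (u 1 + 1) =
      (u 1 + (u 2 + 1)).choose (u 1) + (u 1 + 1 + u 2).choose (u 1 + 1) := by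
    rw [show u 1 + 1 + (u 2 + 1) = u 1 + (u 2 + 1) + 1 by ring, Nat.choose_succ_succ,
      show u 1 + 1 + u 2 = u 1 + (u 2 + 1) by ring]
  simp only [IsFilled, Pi.add_apply, Matrix.cons_val, add_zero, pascal, Nat.odd_add,
    ← Nat.not_odd_iff_even]
  tauto

/-- The cells, relative to the corner of a triangle of size `n`, of that triangle with its corner
`j` cut off to depth `t j`. -/
def hexagon (n : ℕ) (t : Fin 3 → ℕ) : Set (Fin 3 → ℕ) :=
  {q | q 0 + q 1 + q 2 + 1 = n ∧ ∀ j, q j + t j + 1 ≤ n}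

/-- `u` is the offset, inside the first `2 ^ N` rows for some `N`, of a triangle of size `n`. -/
def IsPosition (n : ℕ) (u : Fin 3 → ℕ) : Prop :=
  ∃ N, u 0 + u 1 + u 2 + n = 2 ^ N

/-- The pattern seen at `u` through the window `hexagon n t`, as the set of its filled cells. -/
def pattern (n : ℕ) (t u : Fin 3 → ℕ) : Set (Fin 3 → ℕ) :=
  {q ∈ hexagon n t | IsFilled (u + q)}

/-- All patterns of the Sierpiński triangle in the window `hexagon n t`. -/
def patterns (n : ℕ) (t : Fin 3 → ℕ) : Set (Set (Fin 3 → ℕ)) :=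
  pattern n t '' {u | IsPosition n u}

/-- The patterns in the window `hexagon n t` at the positions of parity class `ε`. -/
def patternsMod (n : ℕ) (t : Fin 3 → ℕ) (ε : Fin 3 → Fin 2) : Set (Set (Fin 3 → ℕ)) :=
  pattern n t '' {u | IsPosition n u ∧ ∀ j, u j % 2 = ε j}

/-- The cells of `hexagon n t` along the cut of corner `j`; for `t j = 0` this is the corner
itself. -/
def side (n : ℕ) (t : Fin 3 → ℕ) (j : Fin 3) : Set (Fin 3 → ℕ) :=
  {q ∈ hexagon n t | q j + t j + 1 = n}

variable {n : ℕ} {t u u' q q' : Fin 3 → ℕ}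

theorem IsPosition.even (hu : IsPosition n u) (hn : 2 ≤ n) : (u 0 + u 1 + u 2 + n) % 2 = 0 := by
  obtain ⟨N, hN⟩ := hu
  cases N <;> omega

theorem mem_pattern_congr_half (hn : 2 ≤ n) (hu : IsPosition n u) (hq : q ∈ pattern n t u)
    (hq' : q' ∈ hexagon n t) (even : ∃ j, (u j + q' j) % 2 = 0)
    (half : ∀ j, (u j + q' j) / 2 = (u j + q j) / 2) : q' ∈ pattern n t u := by
  have parity := hu.even hn
  have hsum := hq.1.1
  have hsum' := hq'.1
  have filled := (isFilled_iff_half (x := u + q) (by simp only [Pi.add_apply]; omega)).1 hq.2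
  refine ⟨hq', (isFilled_iff_half (by simp only [Pi.add_apply]; omega)).2 ⟨even, ?_⟩⟩
  simpa only [Pi.add_apply, half] using filled.2

section Coincidence

variable {i j k : Fin 3}

theorem add_add_eq_of_ne (hij : i ≠ j) (hik : i ≠ k) (hjk : j ≠ k) (x : Fin 3 → ℕ) :
    x 0 + x 1 + x 2 = x i + x j + x k := by
  have univ_eq : (Finset.univ : Finset (Fin 3)) = {i, j, k} := by decide +revert
  rw [← Fin.sum_univ_three, univ_eq, Finset.sum_insert (by simp [hij, hik]), Finset.sum_pair hjk,
    add_assoc]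

theorem eq_or_eq_or_eq_of_ne (hij : i ≠ j) (hik : i ≠ k) (hjk : j ≠ k) (l : Fin 3) :
    l = i ∨ l = j ∨ l = k := by
  decide +revert

theorem forall_iff_of_ne (hij : i ≠ j) (hik : i ≠ k) (hjk : j ≠ k) {P : Fin 3 → Prop} :
    (∀ l, P l) ↔ P i ∧ P j ∧ P k := by
  refine ⟨fun h ↦ ⟨h i, h j, h k⟩, fun ⟨hi, hj, hk⟩ l ↦ ?_⟩
  rcases eq_or_eq_or_eq_of_ne hij hik hjk l with rfl | rfl | rfl <;> assumption

theorem exists_apply_eq_of_ne (hij : i ≠ j) (hik : i ≠ k) (hjk : j ≠ k) (a b c : ℕ) :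
    ∃ x : Fin 3 → ℕ, x i = a ∧ x j = b ∧ x k = c :=
  ⟨fun l ↦ if l = i then a else if l = j then b else c, by simp [hij.symm, hik.symm, hjk.symm]⟩

theorem mem_hexagon_iff_of_ne (hij : i ≠ j) (hik : i ≠ k) (hjk : j ≠ k) :
    q ∈ hexagon n t ↔ q i + q j + q k + 1 = n ∧ q i + t i + 1 ≤ n ∧ q j + t j + 1 ≤ n ∧
      q k + t k + 1 ≤ n := by
  rw [hexagon, Set.mem_ofPred_eq, add_add_eq_of_ne hij hik hjk, forall_iff_of_ne hij hik hjk]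

theorem IsPosition.even_of_ne (hu : IsPosition n u) (hn : 2 ≤ n) (hij : i ≠ j) (hik : i ≠ k)
    (hjk : j ≠ k) : (u i + u j + u k + n) % 2 = 0 := by
  rw [← add_add_eq_of_ne hij hik hjk, hu.even hn]

theorem exists_even_of_mem_pattern (hij : i ≠ j) (hik : i ≠ k) (hjk : j ≠ k)
    (hq : q ∈ pattern n t u) :
    (u i + q i) % 2 = 0 ∨ (u j + q j) % 2 = 0 ∨ (u k + q k) % 2 = 0 := by
  by_contra! h
  refine not_isFilled_of_forall_odd ((forall_iff_of_ne hij hik hjk).2 ?_) hq.2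
  simpa using h

theorem exists_ne_of_ne (hij : i ≠ j) : ∃ k, i ≠ k ∧ j ≠ k := by
  decide +revert

theorem exists_ne_ne_ne (j : Fin 3) : ∃ i k, i ≠ j ∧ i ≠ k ∧ j ≠ k := by
  decide +revert

theorem even_of_mem_pattern (hn : 2 ≤ n) (hu : IsPosition n u)
    (agree : ∀ l, u l % 2 = u' l % 2 ↔ l = j) (hp : pattern n t u = pattern n t u')
    (hq : q ∈ pattern n t u) : (u j + q j) % 2 = 0 := by
  obtain ⟨i, k, hij, hik, hjk⟩ := exists_ne_ne_ne j
  have hi := (agree i).not.2 hij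
  have hj := (agree j).2 rfl
  have hk := (agree k).not.2 hjk.symm
  have parity := hu.even_of_ne hn hij hik hjk
  have hsum := ((mem_hexagon_iff_of_ne hij hik hjk).1 hq.1).1
  have even := exists_even_of_mem_pattern hij hik hjk hq
  have even' := exists_even_of_mem_pattern hij hik hjk (hp ▸ hq)
  omega

variable (hn : 2 ≤ n) (hu : IsPosition n u) (hu' : IsPosition n u')
  (agree : ∀ l, u l % 2 = u' l % 2 ↔ l = j) (hp : pattern n t u = pattern n t u')

include hn hu hu' agree hp

-- Moving one unit from coordinate `i` to coordinate `j` changes the parity of the latter, but it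
-- preserves all halves at one of the positions `u` and `u'`, which differ in parity at `i`.
theorem eq_zero_of_mem_pattern (hij : i ≠ j) (hq : q ∈ pattern n t u)
    (not_side : q j + t j + 1 < n) : q i = 0 := by
  by_contra! hpos
  obtain ⟨k, hik, hjk⟩ := exists_ne_of_ne hij
  obtain ⟨q', hi', hj', hk'⟩ := exists_apply_eq_of_ne hij hik hjk (q i - 1) (q j + 1) (q k)
  have hex := (mem_hexagon_iff_of_ne hij hik hjk).1 hq.1
  have hex' : q' ∈ hexagon n t := (mem_hexagon_iff_of_ne hij hik hjk).2 (by omega)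
  have even := even_of_mem_pattern hn hu agree hp hq
  suffices q' ∈ pattern n t u by
    have := even_of_mem_pattern hn hu agree hp this
    omega
  have hi := (agree i).not.2 hij
  have hj := (agree j).2 rfl
  rcases Nat.mod_two_eq_zero_or_one (u i + q i) with hmod | hmod
  · rw [hp] at hq ⊢
    exact mem_pattern_congr_half hn hu' hq hex' ⟨i, by omega⟩
      ((forall_iff_of_ne hij hik hjk).2 (by omega))
  · exact mem_pattern_congr_half hn hu hq hex' ⟨i, by omega⟩
      ((forall_iff_of_ne hij hik hjk).2 (by omega))

theorem pattern_subset_side : pattern n t u ⊆ side n t j := by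
  intro q hq
  refine ⟨hq.1, ?_⟩
  by_contra hne
  have not_side : q j + t j + 1 < n := lt_of_le_of_ne (hq.1.2 j) hne
  obtain ⟨i, k, hij, hik, hjk⟩ := exists_ne_ne_ne j
  have hqi := eq_zero_of_mem_pattern hn hu hu' agree hp hij hq not_side
  have hqk := eq_zero_of_mem_pattern hn hu hu' agree hp hjk.symm hq not_side
  have hsum := ((mem_hexagon_iff_of_ne hij hik hjk).1 hq.1).1
  omega

theorem side_subset_pattern (ht : t j ≤ 1) (nonempty : (pattern n t u).Nonempty) :
    side n t j ⊆ pattern n t u := by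
  obtain ⟨q, hq⟩ := nonempty
  obtain ⟨i, k, hij, hik, hjk⟩ := exists_ne_ne_ne j
  have hside := (pattern_subset_side hn hu hu' agree hp hq).2
  have even := even_of_mem_pattern hn hu agree hp hq
  have hsum := ((mem_hexagon_iff_of_ne hij hik hjk).1 hq.1).1
  have parity := hu.even_of_ne hn hij hik hjk
  rintro q' ⟨hex', hside'⟩
  have hsum' := ((mem_hexagon_iff_of_ne hij hik hjk).1 hex').1
  have half : (∀ l, (u l + q' l) / 2 = (u l + q l) / 2) ∨
      ∀ l, (u' l + q' l) / 2 = (u' l + q l) / 2 := by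
    have hi := (agree i).not.2 hij
    have hj := (agree j).2 rfl
    have hk := (agree k).not.2 hjk.symm
    simp only [forall_iff_of_ne hij hik hjk]
    omega
  have hj := (agree j).2 rfl
  rcases half with half | half
  · exact mem_pattern_congr_half hn hu hq hex' ⟨j, by omega⟩ half
  · rw [hp] at hq ⊢
    exact mem_pattern_congr_half hn hu' hq hex' ⟨j, by omega⟩ half

theorem pattern_eq_empty_or_eq_side (ht : t j ≤ 1) :
    pattern n t u = ∅ ∨ pattern n t u = side n t j ∧ (u j + n + t j) % 2 = 1 := by
  refine (pattern n t u).eq_empty_or_nonempty.imp_right fun nonempty ↦ ?_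
  have hsub := pattern_subset_side hn hu hu' agree hp
  refine ⟨hsub.antisymm (side_subset_pattern hn hu hu' agree hp ht nonempty), ?_⟩
  obtain ⟨q, hq⟩ := nonempty
  have even := even_of_mem_pattern hn hu agree hp hq
  have hside := (hsub hq).2
  omega

end Coincidence

/-- The parity classes `u % 2` of the positions `u` of size `n ≥ 2`. -/
def parityClasses (n : ℕ) : Finset (Fin 3 → Fin 2) :=
  Finset.univ.filter fun ε ↦ (n + ε 0 + ε 1 + ε 2) % 2 = 0

variable {i j k : Fin 3} {ε ε' : Fin 3 → Fin 2} {p : Set (Fin 3 → ℕ)}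

theorem mem_parityClasses : ε ∈ parityClasses n ↔ (n + ε 0 + ε 1 + ε 2) % 2 = 0 := by
  simp [parityClasses]

theorem exists_agree_iff_of_sum_mod_two_eq : ∀ {ε ε' : Fin 3 → Fin 2},
    (ε 0 + ε 1 + ε 2 : ℕ) % 2 = (ε' 0 + ε' 1 + ε' 2 : ℕ) % 2 → ε ≠ ε' →
      ∃ j, ∀ l, ε l = ε' l ↔ l = j := by
  decide

theorem exists_sum_mod_two_eq_and_agree_iff : ∀ (ε : Fin 3 → Fin 2) (j : Fin 3),
    ∃ ε' : Fin 3 → Fin 2, (ε' 0 + ε' 1 + ε' 2 : ℕ) % 2 = (ε 0 + ε 1 + ε 2 : ℕ) % 2 ∧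
      ∀ l, ε l = ε' l ↔ l = j := by
  decide

theorem eq_empty_or_eq_side_of_mem_patternsMod (hn : 2 ≤ n)
    (agree : ∀ l, ε l = ε' l ↔ l = j) (ht : t j ≤ 1)
    (hp : p ∈ patternsMod n t ε) (hp' : p ∈ patternsMod n t ε') :
    p = ∅ ∨ p = side n t j ∧ (ε j + n + t j) % 2 = 1 := by
  obtain ⟨u, ⟨hu, hmod⟩, rfl⟩ := hp
  obtain ⟨u', ⟨hu', hmod'⟩, heq⟩ := hp'
  refine (pattern_eq_empty_or_eq_side (u' := u') hn hu hu' (fun l ↦ ?_) heq.symm ht).imp_right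
    fun h ↦ ⟨h.1, ?_⟩
  · rw [hmod, hmod', ← Fin.ext_iff, agree]
  · rw [← hmod]
    omega

theorem exists_even_two_pow_ge (a : ℕ) : ∃ N, a ≤ 2 ^ N ∧ 2 ^ N % 2 = 0 :=
  ⟨a + 1, Nat.lt_two_pow_self.le.trans (Nat.pow_le_pow_right two_pos a.le_succ), by omega⟩

theorem empty_mem_patternsMod (hε : ε ∈ parityClasses n) : ∅ ∈ patternsMod n t ε := by
  rw [mem_parityClasses] at hε
  obtain ⟨N, hN, even⟩ := exists_even_two_pow_ge (8 * n + 8)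
  let u : Fin 3 → ℕ := ![2 ^ N - 2 * n - 2 + ε 0, 2 ^ N - 2 * n - 2 + ε 1, 3 * n + 4 - ε 0 - ε 1]
  have hu : u 0 + u 1 + u 2 + n = 2 ^ (N + 1) := by
    simp only [u, Matrix.cons_val]
    omega
  refine ⟨u, ⟨⟨N + 1, hu⟩, ?_⟩, Set.eq_empty_of_forall_notMem fun q ⟨hq, filled⟩ ↦ ?_⟩
  · simp only [u, forall_fin_three, Matrix.cons_val]
    omega
  · have hsum := hq.1
    refine not_isFilled_of_forall_lt_two_pow (N := N) ?_ ?_ filled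
    · simp only [Pi.add_apply]
      omega
    · simp only [u, forall_fin_three, Pi.add_apply, Matrix.cons_val]
      omega

theorem side_mem_patternsMod (hε : ε ∈ parityClasses n) (hj : t j < n)
    (parity : (ε j + n + t j) % 2 = 1) : side n t j ∈ patternsMod n t ε := by
  obtain ⟨N, hN, even⟩ := exists_even_two_pow_ge (8 * n + 8)
  obtain ⟨i, k, hij, hik, hjk⟩ := exists_ne_ne_ne j
  obtain ⟨u, hi, hj, hk⟩ := exists_apply_eq_of_ne hij hik hjk (2 * n + ε i)
    (2 ^ N + t j + 1 - n) (2 ^ N - 2 * n - 1 - t j - ε i)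
  have hu : u 0 + u 1 + u 2 + n = 2 ^ (N + 1) := by
    rw [add_add_eq_of_ne hij hik hjk]
    omega
  have hmod : ∀ l, u l % 2 = ε l := by
    have hεsum : (ε 0 + ε 1 + ε 2 : ℕ) = ε i + ε j + ε k :=
      add_add_eq_of_ne hij hik hjk fun l ↦ (ε l : ℕ)
    rw [mem_parityClasses] at hε
    exact (forall_iff_of_ne hij hik hjk).2 (by omega)
  refine ⟨u, ⟨⟨N + 1, hu⟩, hmod⟩, Set.ext fun q ↦ and_congr_right fun hq ↦ ?_⟩
  have hsum : (u + q) 0 + (u + q) 1 + (u + q) 2 + 1 = 2 ^ (N + 1) := by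
    have := hq.1
    simp only [Pi.add_apply]
    omega
  have hex := (mem_hexagon_iff_of_ne hij hik hjk).1 hq
  refine ⟨fun filled ↦ ?_, fun hside ↦ ?_⟩
  · by_contra hne
    refine not_isFilled_of_forall_lt_two_pow hsum ((forall_iff_of_ne hij hik hjk).2 ?_) filled
    simp only [Pi.add_apply]
    omega
  · refine isFilled_of_eq_two_pow hsum ⟨j, ?_⟩
    simp only [Pi.add_apply]
    omega

theorem exists_mem_side (hn : 3 ≤ n) (ht : ∀ l, t l ≤ 1) (hij : i ≠ j) (hik : i ≠ k)
    (hjk : j ≠ k) : ∃ q ∈ side n t j, q k = 0 := by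
  obtain ⟨q, hi, hj, hk⟩ := exists_apply_eq_of_ne hij hik hjk (t j) (n - 1 - t j) 0
  have := ht i
  have := ht j
  have := ht k
  exact ⟨q, ⟨(mem_hexagon_iff_of_ne hij hik hjk).2 (by omega), by omega⟩, hk⟩

theorem side_ne_empty (hn : 3 ≤ n) (ht : ∀ l, t l ≤ 1) (j : Fin 3) : side n t j ≠ ∅ := by
  obtain ⟨i, k, hij, hik, hjk⟩ := exists_ne_ne_ne j
  obtain ⟨q, hq, -⟩ := exists_mem_side hn ht hij hik hjk
  exact Set.Nonempty.ne_empty ⟨q, hq⟩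

theorem side_injective (hn : 3 ≤ n) (ht : ∀ l, t l ≤ 1) : Function.Injective (side n t) := by
  intro j k heq
  by_contra hjk
  obtain ⟨i, hji, hki⟩ := exists_ne_of_ne hjk
  obtain ⟨q, hq, hqk⟩ := exists_mem_side hn ht hji.symm hki.symm hjk
  have hside := (heq ▸ hq).2
  have := ht k
  omega

theorem side_mem_patternsMod_iff (hn : 3 ≤ n) (ht : ∀ l, t l ≤ 1) (hε : ε ∈ parityClasses n) :
    side n t j ∈ patternsMod n t ε ↔ (ε j + n + t j) % 2 = 1 := by
  have hj := ht j
  refine ⟨fun hmem ↦ ?_, side_mem_patternsMod hε (by omega)⟩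
  by_contra parity
  obtain ⟨i, k, hij, hik, hjk⟩ := exists_ne_ne_ne j
  obtain ⟨ε', hsum, agree⟩ := exists_sum_mod_two_eq_and_agree_iff ε k
  have hmem' : side n t j ∈ patternsMod n t ε' := by
    have := (agree j).not.2 hjk
    rw [mem_parityClasses] at hε
    exact side_mem_patternsMod (mem_parityClasses.2 (by omega)) (by omega) (by omega)
  rcases eq_empty_or_eq_side_of_mem_patternsMod (by omega) agree (ht k) hmem hmem' with h | ⟨h, -⟩
  · exact side_ne_empty hn ht j h
  · exact hjk (side_injective hn ht h)

theorem injOn_inter_preimage {α β : Type*} {D : Set α} {S : Set β} {h : α → β}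
    (hS : S ⊆ h '' D) : Set.InjOn (fun P ↦ D ∩ h ⁻¹' P) (𝒫 S) := by
  intro P hP P' hP' heq
  have subset_of_subset {P₁ P₂ : Set β} (hP₁ : P₁ ⊆ S) (hsub : D ∩ h ⁻¹' P₁ ⊆ D ∩ h ⁻¹' P₂) :
      P₁ ⊆ P₂ := by
    intro y hy
    obtain ⟨x, hx, rfl⟩ := hS (hP₁ hy)
    exact (hsub ⟨hx, hy⟩).2
  exact (subset_of_subset hP heq.subset).antisymm (subset_of_subset hP' heq.symm.subset)

theorem finite_hexagon (n : ℕ) (t : Fin 3 → ℕ) : (hexagon n t).Finite := by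
  refine (Set.finite_Icc 0 fun _ ↦ n).subset fun q hq ↦ ⟨fun _ ↦ Nat.zero_le _, fun j ↦ ?_⟩
  exact (by omega : q j + t j + 1 ≤ n → q j ≤ n) (hq.2 j)

theorem patterns_subset_powerset (n : ℕ) (t : Fin 3 → ℕ) : patterns n t ⊆ 𝒫 hexagon n t := by
  rintro - ⟨u, -, rfl⟩
  exact Set.sep_subset _ _

theorem finite_patterns (n : ℕ) (t : Fin 3 → ℕ) : (patterns n t).Finite :=
  (finite_hexagon n t).finite_subsets.subset (patterns_subset_powerset n t)

section Coarsening

/-- When the three upward cells with the same halved coordinates are merged into one coarse cell,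
this is the relative position of the coarse cell of `q`, as seen from a position of parity class
`ε`. -/
def coarsen (ε : Fin 3 → Fin 2) (q : Fin 3 → ℕ) : Fin 3 → ℕ :=
  fun j ↦ (q j + ε j) / 2

/-- The size of the triangle of coarse cells met by a triangle of size `n` at a position of parity
class `ε`. -/
def coarseSize (n : ℕ) (ε : Fin 3 → Fin 2) : ℕ :=
  (n + ε 0 + ε 1 + ε 2) / 2

/-- The depths of the cuts of the window of coarse cells that `hexagon n t` meets at a position of
parity class `ε`. -/
def coarseCut (t : Fin 3 → ℕ) (ε : Fin 3 → Fin 2) : Fin 3 → ℕ :=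
  fun j ↦ (t j + ε (j + 1) + ε (j + 2)) / 2

/-- The cells of `hexagon n t` that are not holes (cells with three odd coordinates, which are never
filled) at the positions of parity class `ε`. -/
def nonHoles (n : ℕ) (t : Fin 3 → ℕ) (ε : Fin 3 → Fin 2) : Set (Fin 3 → ℕ) :=
  {q ∈ hexagon n t | ∃ j, (q j + ε j) % 2 = 0}

theorem coarsen_mem_hexagon (hε : ε ∈ parityClasses n) (hq : q ∈ nonHoles n t ε) :
    coarsen ε q ∈ hexagon (coarseSize n ε) (coarseCut t ε) := by
  obtain ⟨⟨hsum, hcut⟩, even⟩ := hq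
  rw [mem_parityClasses] at hε
  simp only [hexagon, coarsen, coarseSize, coarseCut, Set.mem_ofPred_eq, forall_fin_three,
    exists_fin_three, Fin.reduceAdd] at hcut even ⊢
  omega

theorem exists_coarsen_eq (hn : 3 ≤ n) (ht : ∀ j, t j ≤ 1) (hε : ε ∈ parityClasses n)
    {Q : Fin 3 → ℕ} (hQ : Q ∈ hexagon (coarseSize n ε) (coarseCut t ε)) :
    ∃ l, ∃ q : Fin 3 → ℕ, (∀ j, q j + ε j = 2 * Q j + if j = l then 1 else 0) ∧
      ∀ j, q j + t j + 1 ≤ n := by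
  obtain ⟨hsum, hcut⟩ := hQ
  rw [mem_parityClasses] at hε
  obtain ⟨l, hl⟩ : ∃ l, ∀ j, ε j ≤ 2 * Q j + (if j = l then 1 else 0) ∧
      2 * Q j + (if j = l then 1 else 0) + t j + 1 ≤ n + ε j := by
    simp only [coarseSize, coarseCut, forall_fin_three, exists_fin_three, Fin.reduceAdd,
      Fin.reduceEq, reduceIte] at ht hsum hcut ⊢
    omega
  refine ⟨l, fun j ↦ 2 * Q j + (if j = l then 1 else 0) - ε j, fun j ↦ ?_, fun j ↦ ?_⟩ <;>
  · have := hl j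
    dsimp only
    omega

theorem hexagon_subset_image_coarsen (hn : 3 ≤ n) (ht : ∀ j, t j ≤ 1) (hε : ε ∈ parityClasses n) :
    hexagon (coarseSize n ε) (coarseCut t ε) ⊆ coarsen ε '' nonHoles n t ε := by
  intro Q hQ
  obtain ⟨l, q, hq, hcut⟩ := exists_coarsen_eq hn ht hε hQ
  obtain ⟨i, k, hil, hik, hlk⟩ := exists_ne_ne_ne l
  have hi := hq i
  have hl := hq l
  have hk := hq k
  rw [if_neg hil] at hi
  rw [if_pos rfl] at hl
  rw [if_neg hlk.symm] at hk
  refine ⟨q, ⟨⟨?_, hcut⟩, i, by omega⟩, ?_⟩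
  · have hεsum : (ε 0 + ε 1 + ε 2 : ℕ) = ε i + ε l + ε k :=
      add_add_eq_of_ne hil hik hlk fun j ↦ (ε j : ℕ)
    have hQsum := hQ.1
    rw [mem_parityClasses] at hε
    rw [coarseSize, add_add_eq_of_ne hil hik hlk] at hQsum
    rw [add_add_eq_of_ne hil hik hlk]
    omega
  · ext j
    have := hq j
    unfold coarsen
    split_ifs at this <;> omega

theorem pattern_eq_inter_preimage (hn : 2 ≤ n) (hu : IsPosition n u) (hmod : ∀ j, u j % 2 = ε j)
    (hε : ε ∈ parityClasses n) :
    pattern n t u = nonHoles n t ε ∩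
      coarsen ε ⁻¹' pattern (coarseSize n ε) (coarseCut t ε) (fun j ↦ u j / 2) := by
  have parity := hu.even hn
  have even_iff (q : Fin 3 → ℕ) (j : Fin 3) : (u + q) j % 2 = 0 ↔ (q j + ε j) % 2 = 0 := by
    rw [← hmod, Pi.add_apply]
    omega
  have half (q : Fin 3 → ℕ) : (fun j ↦ (u + q) j / 2) = (fun j ↦ u j / 2) + coarsen ε q := by
    ext j
    simp only [Pi.add_apply, coarsen, ← hmod]
    omega
  have filled_iff {q : Fin 3 → ℕ} (hq : q ∈ hexagon n t) : IsFilled (u + q) ↔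
      (∃ j, (q j + ε j) % 2 = 0) ∧ IsFilled ((fun j ↦ u j / 2) + coarsen ε q) := by
    have hsum := hq.1
    rw [isFilled_iff_half (by simp only [Pi.add_apply]; omega), half]
    simp only [even_iff]
  ext q
  constructor
  · rintro ⟨hq, filled⟩
    obtain ⟨even, filled_half⟩ := (filled_iff hq).1 filled
    exact ⟨⟨hq, even⟩, coarsen_mem_hexagon hε ⟨hq, even⟩, filled_half⟩
  · rintro ⟨⟨hq, even⟩, -, filled_half⟩
    exact ⟨hq, (filled_iff hq).2 ⟨even, filled_half⟩⟩

theorem isPosition_half (hn : 2 ≤ n) (hu : IsPosition n u) (hmod : ∀ j, u j % 2 = ε j) :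
    IsPosition (coarseSize n ε) (fun j ↦ u j / 2) := by
  obtain ⟨N, hN⟩ := hu
  have h₀ := hmod 0
  have h₁ := hmod 1
  have h₂ := hmod 2
  cases N with
  | zero => omega
  | succ N => exact ⟨N, by dsimp only [coarseSize]; omega⟩

theorem isPosition_double_add {U : Fin 3 → ℕ} (hε : ε ∈ parityClasses n)
    (hU : IsPosition (coarseSize n ε) U) : IsPosition n (fun j ↦ 2 * U j + ε j) := by
  obtain ⟨N, hN⟩ := hU
  rw [mem_parityClasses] at hε
  unfold coarseSize at hN
  exact ⟨N + 1, by dsimp only; omega⟩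

theorem patternsMod_eq_image (hn : 2 ≤ n) (hε : ε ∈ parityClasses n) :
    patternsMod n t ε = (fun P ↦ nonHoles n t ε ∩ coarsen ε ⁻¹' P) ''
      patterns (coarseSize n ε) (coarseCut t ε) := by
  ext p
  constructor
  · rintro ⟨u, ⟨hu, hmod⟩, rfl⟩
    exact ⟨_, ⟨_, isPosition_half hn hu hmod, rfl⟩,
      (pattern_eq_inter_preimage hn hu hmod hε).symm⟩
  · rintro ⟨-, ⟨U, hU, rfl⟩, rfl⟩
    have hmod (j : Fin 3) : (2 * U j + ε j) % 2 = ε j := by omega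
    have half : (fun j ↦ (2 * U j + ε j) / 2) = U := by
      ext j
      omega
    have hu := isPosition_double_add hε hU
    refine ⟨_, ⟨hu, hmod⟩, ?_⟩
    rw [pattern_eq_inter_preimage hn hu hmod hε, half]

theorem ncard_patternsMod (hn : 3 ≤ n) (ht : ∀ j, t j ≤ 1) (hε : ε ∈ parityClasses n) :
    (patternsMod n t ε).ncard = (patterns (coarseSize n ε) (coarseCut t ε)).ncard := by
  rw [patternsMod_eq_image (by omega) hε]
  exact ((injOn_inter_preimage (hexagon_subset_image_coarsen hn ht hε)).mono
    (patterns_subset_powerset _ _)).ncard_image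

end Coarsening

theorem card_biUnion_add_sum_card_filter_mem {ι α : Type*} [DecidableEq α] {I : Finset ι}
    {Q : ι → Finset α} {S : Finset α} (disjoint : (I : Set ι).PairwiseDisjoint fun i ↦ Q i \ S)
    (subset : S ⊆ I.biUnion Q) :
    (I.biUnion Q).card + ∑ s ∈ S, (I.filter fun i ↦ s ∈ Q i).card =
      ∑ i ∈ I, (Q i).card + S.card := by
  have union_sdiff : I.biUnion Q \ S = I.biUnion fun i ↦ Q i \ S := by
    ext x
    simp only [Finset.mem_sdiff, Finset.mem_biUnion]
    tauto
  have double_count : ∑ i ∈ I, (Q i ∩ S).card = ∑ s ∈ S, (I.filter fun i ↦ s ∈ Q i).card := by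
    simp only [← Finset.filter_mem_eq_inter, Finset.inter_comm (Q _)]
    exact Finset.sum_card_bipartiteAbove_eq_sum_card_bipartiteBelow fun i s ↦ s ∈ Q i
  calc (I.biUnion Q).card + ∑ s ∈ S, (I.filter fun i ↦ s ∈ Q i).card
      = (I.biUnion Q \ S).card + S.card + ∑ i ∈ I, (Q i ∩ S).card := by
        rw [double_count, Finset.card_sdiff_add_card_eq_card subset]
    _ = ∑ i ∈ I, ((Q i \ S).card + (Q i ∩ S).card) + S.card := by
        rw [union_sdiff, Finset.card_biUnion disjoint, Finset.sum_add_distrib]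
        ring
    _ = ∑ i ∈ I, (Q i).card + S.card := by
        simp only [Finset.card_sdiff_add_card_inter]

theorem patterns_eq_biUnion (hn : 2 ≤ n) :
    patterns n t = ⋃ ε ∈ parityClasses n, patternsMod n t ε := by
  ext p
  simp only [Set.mem_iUnion]
  constructor
  · rintro ⟨u, hu, rfl⟩
    have parity := hu.even hn
    refine ⟨fun j ↦ ⟨u j % 2, by omega⟩, mem_parityClasses.2 ?_, u, ⟨hu, fun j ↦ rfl⟩, rfl⟩
    dsimp only
    omega
  · rintro ⟨ε, -, u, ⟨hu, -⟩, rfl⟩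
    exact ⟨u, hu, rfl⟩

theorem finite_patternsMod (n : ℕ) (t : Fin 3 → ℕ) (ε : Fin 3 → Fin 2) :
    (patternsMod n t ε).Finite :=
  (finite_patterns n t).subset (Set.image_mono fun _ hu ↦ hu.1)

theorem parityClasses_mod_two (n : ℕ) : parityClasses (n % 2) = parityClasses n := by
  ext ε
  simp only [mem_parityClasses]
  omega

theorem card_parityClasses (n : ℕ) : (parityClasses n).card = 4 := by
  rw [← parityClasses_mod_two]
  rcases Nat.mod_two_eq_zero_or_one n with h | h <;> rw [h] <;> decide

theorem card_filter_parityClasses (n m : ℕ) (j : Fin 3) :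
    ((parityClasses n).filter fun ε ↦ (ε j + m) % 2 = 1).card = 2 := by
  have mod_two (ε : Fin 3 → Fin 2) : (ε j + m) % 2 = (ε j + m % 2) % 2 := by omega
  simp only [mod_two]
  rw [← parityClasses_mod_two]
  clear mod_two
  rcases Nat.mod_two_eq_zero_or_one n with hn | hn <;>
    rcases Nat.mod_two_eq_zero_or_one m with hm | hm <;>
    rw [hn, hm] <;> clear hn hm <;> decide +revert

section DoubleCounting

open scoped Classical in
/-- The patterns occurring in more than one parity class. -/
noncomputable def sharedPatterns (n : ℕ) (t : Fin 3 → ℕ) : Finset (Set (Fin 3 → ℕ)) :=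
  insert ∅ (Finset.univ.image (side n t))

theorem mem_sharedPatterns : p ∈ sharedPatterns n t ↔ p = ∅ ∨ ∃ j, side n t j = p := by
  simp [sharedPatterns]

theorem sum_sharedPatterns (hn : 3 ≤ n) (ht : ∀ j, t j ≤ 1) (f : Set (Fin 3 → ℕ) → ℕ) :
    ∑ s ∈ sharedPatterns n t, f s = f ∅ + ∑ j, f (side n t j) := by
  rw [sharedPatterns, Finset.sum_insert (by simp [side_ne_empty hn ht]),
    Finset.sum_image (side_injective hn ht).injOn]

theorem card_sharedPatterns (hn : 3 ≤ n) (ht : ∀ j, t j ≤ 1) : (sharedPatterns n t).card = 4 := by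
  rw [Finset.card_eq_sum_ones, sum_sharedPatterns hn ht]
  rfl

open scoped Classical in
theorem sum_card_filter_mem_patternsMod (hn : 3 ≤ n) (ht : ∀ j, t j ≤ 1) :
    ∑ s ∈ sharedPatterns n t, ((parityClasses n).filter fun ε ↦ s ∈ patternsMod n t ε).card =
      10 := by
  rw [sum_sharedPatterns hn ht, Finset.filter_true_of_mem fun ε hε ↦ empty_mem_patternsMod hε,
    card_parityClasses]
  have card_side (j : Fin 3) :
      ((parityClasses n).filter fun ε ↦ side n t j ∈ patternsMod n t ε).card = 2 := by
    refine Eq.trans (congrArg _ (Finset.filter_congr fun ε hε ↦ ?_))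
      (card_filter_parityClasses n (n + t j) j)
    rw [side_mem_patternsMod_iff hn ht hε, add_assoc]
  simp [card_side]

theorem patternsMod_inter_subset_sharedPatterns (hn : 2 ≤ n) (ht : ∀ j, t j ≤ 1)
    (hε : ε ∈ parityClasses n) (hε' : ε' ∈ parityClasses n) (hne : ε ≠ ε') :
    patternsMod n t ε ∩ patternsMod n t ε' ⊆ sharedPatterns n t := by
  rintro p ⟨hp, hp'⟩
  rw [mem_parityClasses] at hε hε'
  obtain ⟨j, agree⟩ := exists_agree_iff_of_sum_mod_two_eq (by omega) hne
  exact mem_sharedPatterns.2 <|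
    (eq_empty_or_eq_side_of_mem_patternsMod hn agree (ht j) hp hp').imp_right fun h ↦ ⟨j, h.1.symm⟩

theorem sharedPatterns_subset_patterns (hn : 3 ≤ n) (ht : ∀ j, t j ≤ 1) :
    ↑(sharedPatterns n t) ⊆ patterns n t := by
  intro p hp
  suffices ∃ ε ∈ parityClasses n, p ∈ patternsMod n t ε by
    simpa [patterns_eq_biUnion (by omega : 2 ≤ n)]
  obtain rfl | ⟨j, rfl⟩ := mem_sharedPatterns.1 hp
  · obtain ⟨ε, hε⟩ := Finset.card_pos.1 (card_parityClasses n ▸ four_pos)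
    exact ⟨ε, hε, empty_mem_patternsMod hε⟩
  · obtain ⟨ε, hε⟩ := Finset.card_pos.1 (card_filter_parityClasses n (n + t j) j ▸ two_pos)
    rw [Finset.mem_filter, ← add_assoc] at hε
    exact ⟨ε, hε.1, (side_mem_patternsMod_iff hn ht hε.1).2 hε.2⟩

theorem ncard_patterns_add_six (hn : 3 ≤ n) (ht : ∀ j, t j ≤ 1) :
    (patterns n t).ncard + 6 =
      ∑ ε ∈ parityClasses n, (patterns (coarseSize n ε) (coarseCut t ε)).ncard := by
  classical
  let Q (ε : Fin 3 → Fin 2) : Finset (Set (Fin 3 → ℕ)) := (finite_patternsMod n t ε).toFinset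
  have union_eq : patterns n t = (parityClasses n).biUnion Q := by
    simp [patterns_eq_biUnion (by omega : 2 ≤ n), Q]
  have mem_Q (s : Set (Fin 3 → ℕ)) (ε : Fin 3 → Fin 2) : s ∈ Q ε ↔ s ∈ patternsMod n t ε :=
    Set.Finite.mem_toFinset _
  have card_Q : ∑ ε ∈ parityClasses n, (Q ε).card =
      ∑ ε ∈ parityClasses n, (patterns (coarseSize n ε) (coarseCut t ε)).ncard :=
    Finset.sum_congr rfl fun ε hε ↦ by
      rw [← ncard_patternsMod hn ht hε, Set.ncard_eq_toFinset_card _ (finite_patternsMod n t ε)]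
  have disjoint : (parityClasses n : Set (Fin 3 → Fin 2)).PairwiseDisjoint
      fun ε ↦ Q ε \ sharedPatterns n t := by
    refine fun ε hε ε' hε' hne ↦ Finset.disjoint_left.2 fun p hp hp' ↦ ?_
    simp only [Finset.mem_sdiff, mem_Q] at hp hp'
    exact hp.2 (patternsMod_inter_subset_sharedPatterns (by omega) ht hε hε' hne ⟨hp.1, hp'.1⟩)
  have subset : sharedPatterns n t ⊆ (parityClasses n).biUnion Q := by
    rw [← Finset.coe_subset, ← union_eq]
    exact sharedPatterns_subset_patterns hn ht
  have count := card_biUnion_add_sum_card_filter_mem disjoint subset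
  simp only [mem_Q, card_Q, sum_card_filter_mem_patternsMod hn ht, card_sharedPatterns hn ht]
    at count
  rw [union_eq, Set.ncard_coe_finset]
  omega

end DoubleCounting

theorem exists_isPosition_two (P : Fin 3 → Bool) :
    ∃ u, IsPosition 2 u ∧ ∀ j, IsFilled (u + Pi.single j 1) ↔ P j := by
  have realized : ∀ P : Fin 3 → Bool, ∃ u ∈ Finset.Nat.antidiagonalTuple 3 6,
      ∀ j, IsFilled (u + Pi.single j 1) ↔ P j := by
    unfold IsFilled
    decide
  obtain ⟨u, hu, hP⟩ := realized P
  rw [Finset.Nat.mem_antidiagonalTuple, Fin.sum_univ_three] at hu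
  exact ⟨u, ⟨3, by omega⟩, hP⟩

theorem hexagon_two (ht : ∀ j, t j ≤ 1) :
    hexagon 2 t = (fun j ↦ Pi.single j 1) '' {j | t j = 0} := by
  ext q
  simp only [hexagon, Set.mem_ofPred_eq, Set.mem_image, funext_iff, Pi.single_apply,
    forall_fin_three, exists_fin_three, Fin.reduceEq, reduceIte] at ht ⊢
  omega

theorem ncard_hexagon_two (ht : ∀ j, t j ≤ 1) : (hexagon 2 t).ncard = 3 - (t 0 + t 1 + t 2) := by
  have single_injective : Function.Injective fun j : Fin 3 ↦ (Pi.single j 1 : Fin 3 → ℕ) :=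
    fun i j h ↦ by simpa [Pi.single_apply] using congrFun h i
  rw [hexagon_two ht, Set.ncard_image_of_injective _ single_injective, Set.ncard_eq_toFinset_card',
    Set.toFinset_ofPred, Finset.card_filter, Fin.sum_univ_three]
  have h₀ := ht 0
  have h₁ := ht 1
  have h₂ := ht 2
  split_ifs <;> omega

theorem patterns_two (ht : ∀ j, t j ≤ 1) : patterns 2 t = 𝒫 hexagon 2 t := by
  classical
  refine (patterns_subset_powerset 2 t).antisymm fun P hP ↦ ?_
  obtain ⟨u, hu, filled_iff⟩ := exists_isPosition_two fun j ↦ Pi.single j 1 ∈ P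
  refine ⟨u, hu, Set.ext fun q ↦ ⟨fun ⟨hq, filled⟩ ↦ ?_, fun hq ↦ ⟨hP hq, ?_⟩⟩⟩
  · obtain ⟨j, -, rfl⟩ := hexagon_two ht ▸ hq
    simpa using (filled_iff j).1 filled
  · obtain ⟨j, -, rfl⟩ := hexagon_two ht ▸ hP hq
    simpa [filled_iff] using hq

theorem ncard_patterns_two (ht : ∀ j, t j ≤ 1) :
    (patterns 2 t).ncard = 2 ^ (3 - (t 0 + t 1 + t 2)) := by
  rw [patterns_two ht, Set.ncard_powerset _ (finite_hexagon 2 t), ncard_hexagon_two ht]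

theorem hexagon_one : hexagon 1 0 = {0} := by
  ext q
  simp only [hexagon, Set.mem_ofPred_eq, Set.mem_singleton_iff, funext_iff, forall_fin_three,
    Pi.zero_apply]
  omega

theorem patterns_one : patterns 1 0 = {∅, {0}} := by
  refine Set.Subset.antisymm ?_ (Set.insert_subset ?_ (Set.singleton_subset_iff.2 ?_))
  · rw [← Set.powerset_singleton, ← hexagon_one]
    exact patterns_subset_powerset 1 0
  · refine ⟨![1, 1, 1], ⟨2, rfl⟩, ?_⟩
    simp [pattern, hexagon_one, IsFilled, Set.ext_iff]
  · refine ⟨0, ⟨0, rfl⟩, ?_⟩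
    simp [pattern, hexagon_one, IsFilled, Set.ext_iff]

theorem ncard_patterns_one : (patterns 1 0).ncard = 2 := by
  rw [patterns_one, Set.ncard_pair (Set.singleton_ne_empty _).symm]

theorem mem_hexagon_three_one_iff :
    q ∈ hexagon 3 1 ↔ q = ![0, 1, 1] ∨ q = ![1, 0, 1] ∨ q = ![1, 1, 0] := by
  simp only [hexagon, Set.mem_ofPred_eq, funext_iff, forall_fin_three, Pi.one_apply,
    Matrix.cons_val]
  omega

theorem patterns_three_one : patterns 3 1 = sharedPatterns 3 1 := by
  refine Set.Subset.antisymm ?_ (sharedPatterns_subset_patterns le_rfl fun _ ↦ le_rfl)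
  rintro - ⟨u, -, rfl⟩
  rw [Finset.mem_coe, mem_sharedPatterns]
  have pascal := isFilled_pascal u
  simp only [Set.ext_iff, side, pattern, mem_hexagon_three_one_iff, exists_fin_three,
    Set.mem_ofPred_eq, Set.mem_empty_iff_false, iff_false, not_and, forall_eq_or_imp, forall_eq,
    and_congr_right_iff, Pi.one_apply, Matrix.cons_val, Nat.reduceEqDiff, zero_ne_one,
    false_iff, true_iff]
  tauto

theorem ncard_patterns_three_one : (patterns 3 1).ncard = 4 := by
  rw [patterns_three_one, Set.ncard_coe_finset]
  exact card_sharedPatterns le_rfl fun _ ↦ le_rfl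

section Recurrence

theorem parityClasses_of_even (hn : n % 2 = 0) :
    parityClasses n = {![0, 0, 0], ![0, 1, 1], ![1, 0, 1], ![1, 1, 0]} := by
  rw [← parityClasses_mod_two, hn]
  decide

theorem parityClasses_of_odd (hn : n % 2 = 1) :
    parityClasses n = {![1, 1, 1], ![1, 0, 0], ![0, 1, 0], ![0, 0, 1]} := by
  rw [← parityClasses_mod_two, hn]
  decide

theorem coarseSize_vec (n : ℕ) (a b c : Fin 2) : coarseSize n ![a, b, c] = (n + a + b + c) / 2 :=
  rfl

theorem coarseCut_vec (t : Fin 3 → ℕ) (a b c : Fin 2) :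
    coarseCut t ![a, b, c] = ![(t 0 + b + c) / 2, (t 1 + c + a) / 2, (t 2 + a + b) / 2] := by
  ext j
  fin_cases j <;> rfl

theorem ncard_patterns_two_mul {m : ℕ} (hm : 2 ≤ m) (ht : ∀ j, t j ≤ 1) :
    (patterns (2 * m) t).ncard + 6 =
      (patterns m ![0, 0, 0]).ncard + ((patterns (m + 1) ![1, t 1, t 2]).ncard +
      ((patterns (m + 1) ![t 0, 1, t 2]).ncard + (patterns (m + 1) ![t 0, t 1, 1]).ncard)) := by
  have half (j : Fin 3) : t j / 2 = 0 ∧ (t j + 1) / 2 = t j ∧ (t j + 1 + 1) / 2 = 1 := by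
    have := ht j
    omega
  have half_size : (2 * m + 1 + 1) / 2 = m + 1 := by omega
  rw [ncard_patterns_add_six (by omega) ht, parityClasses_of_even (by omega)]
  simp [coarseSize_vec, coarseCut_vec, half, half_size]

theorem ncard_patterns_two_mul_add_one {m : ℕ} (hm : 1 ≤ m) (ht : ∀ j, t j ≤ 1) :
    (patterns (2 * m + 1) t).ncard + 6 =
      (patterns (m + 2) ![1, 1, 1]).ncard + ((patterns (m + 1) ![0, t 1, t 2]).ncard +
      ((patterns (m + 1) ![t 0, 0, t 2]).ncard + (patterns (m + 1) ![t 0, t 1, 0]).ncard)) := by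
  have half (j : Fin 3) : t j / 2 = 0 ∧ (t j + 1) / 2 = t j ∧ (t j + 1 + 1) / 2 = 1 := by
    have := ht j
    omega
  have half_size : (2 * m + 1 + 1) / 2 = m + 1 ∧ (2 * m + 1 + 1 + 1 + 1) / 2 = m + 2 := by omega
  rw [ncard_patterns_add_six (by omega) ht, parityClasses_of_odd (by omega)]
  simp [coarseSize_vec, coarseCut_vec, half, half_size]

end Recurrence

theorem ncard_patterns (hn : 2 ≤ n) (ht : ∀ j, t j ≤ 1) (size : 2 < n ∨ t 0 + t 1 + t 2 ≤ 2) :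
    ((patterns n t).ncard : ℤ) = 4 * n ^ 2 - (6 + 4 * (t 0 + t 1 + t 2)) * n + 4 +
      3 * (t 0 + t 1 + t 2) + (t 0 + t 1 + t 2) ^ 2 := by
  induction n using Nat.strong_induction_on generalizing t with
  | _ n ih =>
  have ih_vec {k a b c : ℕ} (hkn : k < n) (hk : 2 ≤ k) (ha : a ≤ 1) (hb : b ≤ 1) (hc : c ≤ 1)
      (size : 2 < k ∨ a + b + c ≤ 2) : ((patterns k ![a, b, c]).ncard : ℤ) =
        4 * k ^ 2 - (6 + 4 * (a + b + c)) * k + 4 + 3 * (a + b + c) + (a + b + c) ^ 2 :=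
    ih k hkn hk (by simp [forall_fin_three, ha, hb, hc]) size
  have h₀ := ht 0
  have h₁ := ht 1
  have h₂ := ht 2
  have sq_eq (j : Fin 3) : (t j : ℤ) ^ 2 = t j := by
    have := ht j
    interval_cases t j <;> rfl
  rcases hn.eq_or_lt with rfl | hn
  · rw [ncard_patterns_two ht]
    interval_cases t 0 <;> interval_cases t 1 <;> interval_cases t 2 <;> omega
  obtain ⟨m, rfl | rfl⟩ := n.even_or_odd'
  · have recurrence := ncard_patterns_two_mul (m := m) (by omega) ht
    zify at recurrence
    rw [ih_vec, ih_vec, ih_vec, ih_vec] at recurrence <;> try omega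
    push_cast at recurrence ⊢
    linear_combination recurrence + sq_eq 0 + sq_eq 1 + sq_eq 2
  · have hm : 1 ≤ m := by omega
    have recurrence := ncard_patterns_two_mul_add_one hm ht
    have ncard_full_cut : ((patterns (m + 2) ![1, 1, 1]).ncard : ℤ) = 4 * m ^ 2 - 2 * m + 2 := by
      rcases hm.eq_or_lt with rfl | hm
      · have one_eq : (![1, 1, 1] : Fin 3 → ℕ) = 1 := by decide
        rw [one_eq, ncard_patterns_three_one]
        rfl
      · rw [ih_vec (by omega) (by omega) le_rfl le_rfl le_rfl (by omega)]
        push_cast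
        ring
    zify at recurrence
    rw [ncard_full_cut, ih_vec, ih_vec, ih_vec] at recurrence <;> try omega
    push_cast at recurrence ⊢
    linear_combination recurrence + sq_eq 0 + sq_eq 1 + sq_eq 2
/-- The upward units `(k, 2 * j)` of a triangle of size `n`, in the row and column coordinates of
`upPattern`. -/
def upUnits (n : ℕ) : Set (ℕ × ℕ) :=
  {z | z.1 < n ∧ z.2 ≤ 2 * z.1 ∧ z.2 % 2 = 0}

/-- The barycentric coordinates of the upward unit `z` in a triangle of size `n`. -/
def barycentric (n : ℕ) (z : ℕ × ℕ) : Fin 3 → ℕ :=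
  ![n - 1 - z.1, z.2 / 2, z.1 - z.2 / 2]

theorem barycentric_mem_hexagon {z : ℕ × ℕ} (hz : z ∈ upUnits n) :
    barycentric n z ∈ hexagon n 0 := by
  obtain ⟨hrow, hcol, -⟩ := hz
  simp only [hexagon, barycentric, Set.mem_ofPred_eq, forall_fin_three, Pi.zero_apply,
    Matrix.cons_val]
  omega

theorem hexagon_subset_image_barycentric (n : ℕ) : hexagon n 0 ⊆ barycentric n '' upUnits n := by
  rintro q ⟨hsum, -⟩
  have mem_upUnits : (q 1 + q 2, 2 * q 1) ∈ upUnits n := by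
    simp only [upUnits, Set.mem_ofPred_eq]
    omega
  refine ⟨_, mem_upUnits, funext_iff.2 ?_⟩
  simp only [barycentric, forall_fin_three, Matrix.cons_val]
  omega

/-- The encoding of patterns used in `Pup`, for a pattern given by the barycentric coordinates of
its filled cells. -/
noncomputable def upPatternOf (n : ℕ) (p : Set (Fin 3 → ℕ)) : ℕ × ℕ → Bool :=
  (upUnits n ∩ barycentric n ⁻¹' p).boolIndicator

theorem upPatternOf_injOn (n : ℕ) : Set.InjOn (upPatternOf n) (𝒫 hexagon n 0) := by
  intro p hp p' hp' heq
  refine injOn_inter_preimage (hexagon_subset_image_barycentric n) hp hp' (Set.ext fun z ↦ ?_)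
  rw [Set.mem_iff_boolIndicator, Set.mem_iff_boolIndicator]
  exact iff_of_eq (congrArg (· = true) (congrFun heq z))

theorem upPattern_eq_upPatternOf (n : ℕ) (u : Fin 3 → ℕ) :
    upPattern n (u 1 + u 2) (2 * u 1) = upPatternOf n (pattern n 0 u) := by
  ext z
  rw [Bool.eq_iff_iff, upPatternOf, ← Set.mem_iff_boolIndicator]
  have mem_iff : z ∈ upUnits n ∩ barycentric n ⁻¹' pattern n 0 u ↔
      z ∈ upUnits n ∧ IsFilled (u + barycentric n z) :=
    and_congr_right fun hz ↦ and_iff_right (barycentric_mem_hexagon hz)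
  rw [mem_iff]
  simp only [upPattern, filled, upUnits, Set.mem_ofPred_eq, Bool.if_false_right, Bool.and_eq_true,
    decide_eq_true_eq, and_assoc]
  refine and_congr_right fun _ ↦ and_congr_right fun hcol ↦ ?_
  have col_mod : (2 * u 1 + z.2) % 2 = z.2 % 2 := by omega
  have col_half : (2 * u 1 + z.2) / 2 = u 1 + z.2 / 2 := by omega
  have row : u 1 + z.2 / 2 + (u 2 + (z.1 - z.2 / 2)) = u 1 + u 2 + z.1 := by omega
  simp only [IsFilled, barycentric, Pi.add_apply, Matrix.cons_val, Nat.odd_iff, col_mod, col_half,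
    row]

theorem Pup_eq_image (n : ℕ) : Pup n = upPatternOf n '' patterns n 0 := by
  ext p
  constructor
  · rintro ⟨r, c, heven, hc, rfl⟩
    obtain ⟨N, hN⟩ : ∃ N, r + n ≤ 2 ^ N := ⟨_, Nat.lt_two_pow_self.le⟩
    let u : Fin 3 → ℕ := ![2 ^ N - (r + n), c / 2, r - c / 2]
    have hu : IsPosition n u := ⟨N, by simp only [u, Matrix.cons_val]; omega⟩
    refine ⟨_, ⟨u, hu, rfl⟩, ?_⟩
    rw [← upPattern_eq_upPatternOf]
    simp only [u, Matrix.cons_val]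
    congr 1 <;> omega
  · rintro ⟨-, ⟨u, -, rfl⟩, rfl⟩
    exact ⟨u 1 + u 2, 2 * u 1, by omega, by omega, (upPattern_eq_upPatternOf n u).symm⟩

theorem ncard_Pup (n : ℕ) : (Pup n).ncard = (patterns n 0).ncard := by
  rw [Pup_eq_image]
  exact ((upPatternOf_injOn n).mono (patterns_subset_powerset n 0)).ncard_image

theorem finite_Pup (n : ℕ) : (Pup n).Finite := by
  rw [Pup_eq_image]
  exact (finite_patterns n 0).image _

end SierpinskiTriangle

theorem sierpinski_up_count (n : ℕ) (hn : 1 ≤ n) :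
    (Pup n).Finite ∧ ((Pup n).ncard : ℤ) = 4 * (n : ℤ) ^ 2 - 6 * n + 4 := by
  refine ⟨SierpinskiTriangle.finite_Pup n, ?_⟩
  rw [SierpinskiTriangle.ncard_Pup]
  rcases hn.eq_or_lt with rfl | hn
  · rw [SierpinskiTriangle.ncard_patterns_one]
    rfl
  · simpa using SierpinskiTriangle.ncard_patterns (t := 0) hn (fun _ ↦ zero_le_one)
      (Or.inr (Nat.zero_le 2))
end

section
/- For every n ≥ 2, the number of distinct top-cut patterns of size n occurring in the Sierpiński triangle T equals 4n² − 10n + 8, i.e. B_n = 4n² − 10n + 8. -/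
/-!
Give a unit of the approximation `T_N` barycentric coordinates `(i, j, k)` with
`i + j + k = 2 ^ N - 1`. By Kummer's theorem it is filled exactly when the binary expansions of
`i`, `j`, `k` are pairwise disjoint, which makes the threefold symmetry visible and turns the
substitution into dropping the last binary digits. Consequently the patterns of a triangle with cut
corners that occur in a fixed parity class of positions correspond bijectively to all the patterns
of a triangle about half as large, whose corners are again cut by at most one unit.

There are four parity classes. The empty pattern occurs in all four, each of the three patterns in
which exactly the cells at one corner are filled occurs in two, and every other pattern occurs in
one. So the four counts for the half-size triangles add up to the number of patterns plus
`3 + 3 = 6`. If `c` corners of a triangle of side `n` are cut, `g = 2 * n - c` then yields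
`g ^ 2 - 3 * g + 4` patterns by induction, and the theorem is the case `c = 1`.
-/

namespace Sierpinski

section Cells

/-- The cell with barycentric coordinates `(i, j, k)` is filled. In the approximation `T_N` the
unit `(i + j, 2j)` has coordinates `(i, j, k)` with `i + j + k + 1 = 2 ^ N`, and by Kummer's theorem
`choose (i + j) j` is odd exactly when the three coordinates have disjoint binary expansions. -/
def IsFilled (i j k : ℕ) : Prop := i &&& j = 0 ∧ j &&& k = 0 ∧ k &&& i = 0

instance (i j k : ℕ) : Decidable (IsFilled i j k) :=
  inferInstanceAs (Decidable (_ ∧ _ ∧ _))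

theorem land_eq_zero_iff_half (i j : ℕ) :
    i &&& j = 0 ↔ i / 2 &&& j / 2 = 0 ∧ i % 2 + j % 2 ≤ 1 := by
  have hmod := Nat.and_mod_two_eq_one (a := i) (b := j)
  rw [← Nat.and_div_two]
  omega

theorem odd_choose_iff_land_eq_zero (i j : ℕ) : (i + j).choose j % 2 = 1 ↔ i &&& j = 0 := by
  induction i using Nat.strong_induction_on generalizing j with
  | _ i ih =>
  obtain rfl | hi := Nat.eq_zero_or_pos i
  · simp
  have : Fact (Nat.Prime 2) := ⟨Nat.prime_two⟩
  have lucas : (i + j).choose j % 2 =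
      ((i + j) % 2).choose (j % 2) * ((i + j) / 2).choose (j / 2) % 2 :=
    Choose.choose_modEq_choose_mod_mul_choose_div_nat
  rw [land_eq_zero_iff_half, ← ih (i / 2) (by omega), lucas]
  by_cases hcarry : i % 2 + j % 2 ≤ 1
  · have hdiv : (i + j) / 2 = i / 2 + j / 2 := by omega
    have hone : ((i + j) % 2).choose (j % 2) = 1 := by
      obtain hj | hj := Nat.mod_two_eq_zero_or_one j
      · simp [hj]
      · simp [hj, show (i + j) % 2 = 1 by omega]
    simp [hdiv, hone, hcarry]
  · have hzero : ((i + j) % 2).choose (j % 2) = 0 := by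
      simp [show (i + j) % 2 = 0 by omega, show j % 2 = 1 by omega]
    simp [hcarry, hzero]

theorem isFilled_rotate {i j k : ℕ} : IsFilled j k i ↔ IsFilled i j k := by
  unfold IsFilled
  tauto

theorem isFilled_iff_half (i j k : ℕ) :
    IsFilled i j k ↔ IsFilled (i / 2) (j / 2) (k / 2) ∧ i % 2 + j % 2 + k % 2 ≤ 1 := by
  simp only [IsFilled, land_eq_zero_iff_half i, land_eq_zero_iff_half j, land_eq_zero_iff_half k]
  omega

theorem isFilled_iff_land_eq_zero {i j k N : ℕ} (h : i + j + k + 1 = 2 ^ N) :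
    IsFilled i j k ↔ i &&& j = 0 := by
  refine ⟨And.left, fun hij => ?_⟩
  induction N generalizing i j k with
  | zero =>
    obtain ⟨rfl, rfl, rfl⟩ : i = 0 ∧ j = 0 ∧ k = 0 := by omega
    decide
  | succ N ih =>
    rw [land_eq_zero_iff_half] at hij
    rw [pow_succ] at h
    rw [isFilled_iff_half]
    exact ⟨ih (by omega) hij.1, by omega⟩

theorem isFilled_iff_odd_choose {i j k N : ℕ} (h : i + j + k + 1 = 2 ^ N) :
    IsFilled i j k ↔ (i + j).choose j % 2 = 1 := by
  rw [isFilled_iff_land_eq_zero h, odd_choose_iff_land_eq_zero]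

theorem filled_eq_decide_isFilled {i j k N : ℕ} (h : i + j + k + 1 = 2 ^ N) :
    filled (i + j) (2 * j) = decide (IsFilled i j k) := by
  simp [filled, isFilled_iff_odd_choose h]

theorem isFilled_pascal {i j k N : ℕ} (h : i + j + k + 3 = 2 ^ N) :
    IsFilled (i + 1) (j + 1) k ↔ ¬(IsFilled (i + 1) j (k + 1) ↔ IsFilled i (j + 1) (k + 1)) := by
  rw [isFilled_iff_odd_choose (N := N) (by omega), isFilled_iff_odd_choose (N := N) (by omega),
    isFilled_iff_odd_choose (N := N) (by omega), show i + 1 + (j + 1) = i + j + 1 + 1 by omega,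
    show i + 1 + j = i + j + 1 by omega, show i + (j + 1) = i + j + 1 by omega,
    Nat.choose_succ_succ']
  omega

theorem land_ne_zero_of_two_pow_le {N i j : ℕ} (hi : 2 ^ N ≤ i) (hi' : i < 2 ^ (N + 1))
    (hj : 2 ^ N ≤ j) (hj' : j < 2 ^ (N + 1)) : i &&& j ≠ 0 := by
  have hbit : (i &&& j).testBit N = true := by
    rw [Nat.testBit_and, Nat.testBit_of_two_pow_le_and_two_pow_add_one_gt hi hi',
      Nat.testBit_of_two_pow_le_and_two_pow_add_one_gt hj hj', Bool.and_self]
  intro h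
  simp [h] at hbit

theorem two_pow_land_eq_zero {N i : ℕ} (hi : i < 2 ^ N) : 2 ^ N &&& i = 0 := by
  rw [Nat.two_pow_and, Nat.testBit_lt_two_pow hi]
  simp

end Cells

section Patterns

/-- The triangle of side `n` with smaller triangles of sides `a`, `b`, `c` removed at its three
corners, in barycentric coordinates with sum `n - 1`. -/
def region (n a b c : ℕ) : Finset (ℕ × ℕ × ℕ) :=
  {q ∈ Finset.range (n - a) ×ˢ Finset.range (n - b) ×ˢ Finset.range (n - c) |
    q.1 + q.2.1 + q.2.2 + 1 = n}

/-- The pattern seen through `region n a b c` placed at `(i, j, k)`, as its set of filled cells. -/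
def pattern (n a b c i j k : ℕ) : Finset (ℕ × ℕ × ℕ) :=
  {q ∈ region n a b c | IsFilled (i + q.1) (j + q.2.1) (k + q.2.2)}

/-- `(i, j, k)` is the position of a triangle of side `n` in some approximation `T_N`: moving it by
barycentric coordinates with sum `n - 1` yields coordinates with sum `2 ^ N - 1`. -/
def IsPosition (n i j k : ℕ) : Prop := ∃ N, i + j + k + n = 2 ^ N

/-- The patterns occurring in the Sierpiński triangle through `region n a b c`. -/
def patterns (n a b c : ℕ) : Set (Finset (ℕ × ℕ × ℕ)) :=
  {S | ∃ i j k, IsPosition n i j k ∧ S = pattern n a b c i j k}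

/-- The patterns occurring at positions congruent to `(α, β, γ)` modulo 2. -/
def patternsMod (n a b c α β γ : ℕ) : Set (Finset (ℕ × ℕ × ℕ)) :=
  {S | ∃ i j k, IsPosition n i j k ∧ i % 2 = α ∧ j % 2 = β ∧ k % 2 = γ ∧
    S = pattern n a b c i j k}

variable {n a b c : ℕ}

@[simp]
theorem mem_region {x y z : ℕ} :
    (x, y, z) ∈ region n a b c ↔
      (x < n - a ∧ y < n - b ∧ z < n - c) ∧ x + y + z + 1 = n := by
  simp [region]

@[simp]
theorem mem_pattern {i j k x y z : ℕ} :
    (x, y, z) ∈ pattern n a b c i j k ↔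
      (x, y, z) ∈ region n a b c ∧ IsFilled (i + x) (j + y) (k + z) := by
  simp [pattern]

theorem pattern_subset_region (i j k : ℕ) : pattern n a b c i j k ⊆ region n a b c :=
  Finset.filter_subset _ _

theorem subset_region_of_mem_patterns {S : Finset (ℕ × ℕ × ℕ)} (hS : S ∈ patterns n a b c) :
    S ⊆ region n a b c := by
  obtain ⟨i, j, k, -, rfl⟩ := hS
  exact pattern_subset_region i j k

theorem patterns_finite (n a b c : ℕ) : (patterns n a b c).Finite :=
  (region n a b c).powerset.finite_toSet.subset fun _ hS =>
    Finset.mem_coe.2 (Finset.mem_powerset.2 (subset_region_of_mem_patterns hS))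

theorem patternsMod_subset_patterns (α β γ : ℕ) : patternsMod n a b c α β γ ⊆ patterns n a b c :=
  fun _ ⟨i, j, k, hpos, _, _, _, hS⟩ => ⟨i, j, k, hpos, hS⟩

theorem IsPosition.even_sum {i j k : ℕ} (h : IsPosition n i j k) (hn : 2 ≤ n) :
    (i + j + k + n) % 2 = 0 := by
  obtain ⟨N, hN⟩ := h
  cases N with
  | zero => omega
  | succ N => rw [hN, pow_succ, Nat.mul_mod_left]

end Patterns

section Rotation

/-- Rotation of barycentric coordinates by a third of a turn. -/
def rotate : ℕ × ℕ × ℕ ≃ ℕ × ℕ × ℕ where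
  toFun q := (q.2.1, q.2.2, q.1)
  invFun q := (q.2.2, q.1, q.2.1)

@[simp]
theorem mem_map_rotate {S : Finset (ℕ × ℕ × ℕ)} {x y z : ℕ} :
    (y, z, x) ∈ S.map rotate.toEmbedding ↔ (x, y, z) ∈ S :=
  Finset.mem_map_equiv

theorem map_rotate_pattern (n a b c i j k : ℕ) :
    (pattern n a b c i j k).map rotate.toEmbedding = pattern n b c a j k i := by
  ext ⟨y, z, x⟩
  simp only [mem_map_rotate, mem_pattern, mem_region, isFilled_rotate]
  refine and_congr_left' ?_
  omega

theorem map_rotate_mem_patternsMod {n a b c α β γ : ℕ} {S : Finset (ℕ × ℕ × ℕ)} :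
    S.map rotate.toEmbedding ∈ patternsMod n b c a β γ α ↔ S ∈ patternsMod n a b c α β γ := by
  constructor
  · rintro ⟨j, k, i, ⟨N, hN⟩, hj, hk, hi, hS⟩
    rw [← map_rotate_pattern n a b c i j k, Finset.map_inj] at hS
    exact ⟨i, j, k, ⟨N, by omega⟩, hi, hj, hk, hS⟩
  · rintro ⟨i, j, k, ⟨N, hN⟩, hi, hj, hk, rfl⟩
    exact ⟨j, k, i, ⟨N, by omega⟩, hj, hk, hi, map_rotate_pattern n a b c i j k⟩

end Rotation

section Substitution

/-- One step of the substitution generating the Sierpiński triangle, read through a window in the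
parity class `(α, β, γ)`: each filled cell of `S` is replaced by its three filled children. -/
def inflate (n a b c α β γ : ℕ) (S : Finset (ℕ × ℕ × ℕ)) : Finset (ℕ × ℕ × ℕ) :=
  {q ∈ region n a b c | (q.1 + α) % 2 + (q.2.1 + β) % 2 + (q.2.2 + γ) % 2 ≤ 1 ∧
    ((q.1 + α) / 2, (q.2.1 + β) / 2, (q.2.2 + γ) / 2) ∈ S}

variable {n a b c α β γ : ℕ}

@[simp]
theorem mem_inflate {S : Finset (ℕ × ℕ × ℕ)} {x y z : ℕ} :
    (x, y, z) ∈ inflate n a b c α β γ S ↔ (x, y, z) ∈ region n a b c ∧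
      (x + α) % 2 + (y + β) % 2 + (z + γ) % 2 ≤ 1 ∧
        ((x + α) / 2, (y + β) / 2, (z + γ) / 2) ∈ S := by
  simp [inflate]

theorem half_mem_region {x y z : ℕ} (hpar : (α + β + γ + n) % 2 = 0)
    (hq : (x, y, z) ∈ region n a b c) (hlow : (x + α) % 2 + (y + β) % 2 + (z + γ) % 2 ≤ 1) :
    ((x + α) / 2, (y + β) / 2, (z + γ) / 2) ∈
      region ((n + α + β + γ) / 2) ((a + β + γ) / 2) ((b + γ + α) / 2) ((c + α + β) / 2) := by
  simp only [mem_region] at hq ⊢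
  omega

theorem pattern_two_mul_add (hpar : (α + β + γ + n) % 2 = 0) (i j k : ℕ) :
    pattern n a b c (2 * i + α) (2 * j + β) (2 * k + γ) =
      inflate n a b c α β γ (pattern ((n + α + β + γ) / 2) ((a + β + γ) / 2) ((b + γ + α) / 2)
        ((c + α + β) / 2) i j k) := by
  have hmod (i x α : ℕ) : (2 * i + α + x) % 2 = (x + α) % 2 := by omega
  have hdiv (i x α : ℕ) : (2 * i + α + x) / 2 = i + (x + α) / 2 := by omega
  ext ⟨x, y, z⟩
  rw [mem_inflate, mem_pattern, mem_pattern, isFilled_iff_half]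
  simp only [hmod, hdiv]
  have := half_mem_region (x := x) (y := y) (z := z) (a := a) (b := b) (c := c) hpar
  tauto

theorem exists_half_eq (hab : a + b < n) (hca : c + a < n)
    (hα : α ≤ 1) (hβ : β ≤ 1) (hγ : γ ≤ 1) (hpar : (α + β + γ + n) % 2 = 0) {x' y' z' : ℕ}
    (hq : (x', y', z') ∈ region ((n + α + β + γ) / 2) ((a + β + γ) / 2) ((b + γ + α) / 2)
      ((c + α + β) / 2)) :
    ∃ x y z, (x, y, z) ∈ region n a b c ∧ (x + α) % 2 + (y + β) % 2 + (z + γ) % 2 ≤ 1 ∧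
      (x + α) / 2 = x' ∧ (y + β) / 2 = y' ∧ (z + γ) / 2 = z' := by
  simp only [mem_region] at hq ⊢
  have hx : 2 * x' + a + 1 ≤ n + α := by omega
  have hy : 2 * y' + b + 1 ≤ n + β := by omega
  have hz : 2 * z' + c + 1 ≤ n + γ := by omega
  have hsum : 2 * (x' + y' + z') + 2 = n + α + β + γ := by omega
  clear hq hpar
  have hbit : (2 * x' + a + 1 < n + α ∧ β ≤ 2 * y' ∧ γ ≤ 2 * z') ∨
      (2 * y' + b + 1 < n + β ∧ γ ≤ 2 * z' ∧ α ≤ 2 * x') ∨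
      (2 * z' + c + 1 < n + γ ∧ α ≤ 2 * x' ∧ β ≤ 2 * y') := by
    by_cases hx0 : x' = 0 ∧ α = 1
    · left; omega
    by_cases hy0 : y' = 0 ∧ β = 1
    · right; left; omega
    by_cases hz0 : z' = 0 ∧ γ = 1
    · right; right; omega
    have : α ≤ 2 * x' ∧ β ≤ 2 * y' ∧ γ ≤ 2 * z' := by omega
    simp only [this, and_self, and_true]
    omega
  obtain ⟨h, hy', hz'⟩ | ⟨h, hz', hx'⟩ | ⟨h, hx', hy'⟩ := hbit
  · exact ⟨2 * x' + 1 - α, 2 * y' - β, 2 * z' - γ, by omega⟩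
  · exact ⟨2 * x' - α, 2 * y' + 1 - β, 2 * z' - γ, by omega⟩
  · exact ⟨2 * x' - α, 2 * y' - β, 2 * z' + 1 - γ, by omega⟩

theorem inflate_injOn (hab : a + b < n) (hca : c + a < n) (hα : α ≤ 1) (hβ : β ≤ 1) (hγ : γ ≤ 1)
    (hpar : (α + β + γ + n) % 2 = 0) :
    Set.InjOn (inflate n a b c α β γ) {S | S ⊆ region ((n + α + β + γ) / 2) ((a + β + γ) / 2)
      ((b + γ + α) / 2) ((c + α + β) / 2)} := by
  have subset_of_inflate_eq {S S' : Finset (ℕ × ℕ × ℕ)}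
      (hS : S ⊆ region ((n + α + β + γ) / 2) ((a + β + γ) / 2) ((b + γ + α) / 2)
        ((c + α + β) / 2))
      (h : inflate n a b c α β γ S = inflate n a b c α β γ S') : S ⊆ S' := by
    rintro ⟨x', y', z'⟩ hmem
    obtain ⟨x, y, z, hq, hlow, rfl, rfl, rfl⟩ :=
      exists_half_eq hab hca hα hβ hγ hpar (hS hmem)
    have hinfl := mem_inflate.2 ⟨hq, hlow, hmem⟩
    rw [h] at hinfl
    exact (mem_inflate.1 hinfl).2.2
  exact fun S hS S' hS' h =>
    (subset_of_inflate_eq hS h).antisymm (subset_of_inflate_eq hS' h.symm)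

theorem patternsMod_eq_image (hα : α ≤ 1) (hβ : β ≤ 1) (hγ : γ ≤ 1)
    (hpar : (α + β + γ + n) % 2 = 0) :
    patternsMod n a b c α β γ = inflate n a b c α β γ '' patterns ((n + α + β + γ) / 2)
      ((a + β + γ) / 2) ((b + γ + α) / 2) ((c + α + β) / 2) := by
  ext S
  constructor
  · rintro ⟨i, j, k, ⟨N, hN⟩, rfl, rfl, rfl, rfl⟩
    obtain _ | N := N
    · omega
    refine ⟨_, ⟨i / 2, j / 2, k / 2, ⟨N, by rw [pow_succ] at hN; omega⟩, rfl⟩, ?_⟩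
    rw [← pattern_two_mul_add hpar, Nat.div_add_mod, Nat.div_add_mod, Nat.div_add_mod]
  · rintro ⟨_, ⟨i, j, k, ⟨N, hN⟩, rfl⟩, rfl⟩
    exact ⟨2 * i + α, 2 * j + β, 2 * k + γ, ⟨N + 1, by rw [pow_succ]; omega⟩, by omega, by omega,
      by omega, (pattern_two_mul_add hpar i j k).symm⟩

theorem ncard_patternsMod (hab : a + b < n) (hca : c + a < n)
    (hα : α ≤ 1) (hβ : β ≤ 1) (hγ : γ ≤ 1) (hpar : (α + β + γ + n) % 2 = 0) :
    (patternsMod n a b c α β γ).ncard = (patterns ((n + α + β + γ) / 2)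
      ((a + β + γ) / 2) ((b + γ + α) / 2) ((c + α + β) / 2)).ncard := by
  rw [patternsMod_eq_image hα hβ hγ hpar]
  exact ((inflate_injOn hab hca hα hβ hγ hpar).mono
    fun _ hS => subset_region_of_mem_patterns hS).ncard_image

end Substitution

section Caps

/-- The cells of `region n a b c` nearest to its first corner: the corner itself if `a = 0`, the
pair of cells exposed by the cut if `a = 1`. -/
def capX (n a b c : ℕ) : Finset (ℕ × ℕ × ℕ) := {q ∈ region n a b c | q.1 + a + 1 = n}

/-- The cells of `region n a b c` nearest to its second corner. -/
def capY (n a b c : ℕ) : Finset (ℕ × ℕ × ℕ) := {q ∈ region n a b c | q.2.1 + b + 1 = n}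

/-- The cells of `region n a b c` nearest to its third corner. -/
def capZ (n a b c : ℕ) : Finset (ℕ × ℕ × ℕ) := {q ∈ region n a b c | q.2.2 + c + 1 = n}

variable {n a b c i j k i' j' k' x y z x' y' z' : ℕ}

@[simp]
theorem mem_capX : (x, y, z) ∈ capX n a b c ↔ (x, y, z) ∈ region n a b c ∧ x + a + 1 = n := by
  simp [capX]

@[simp]
theorem mem_capY : (x, y, z) ∈ capY n a b c ↔ (x, y, z) ∈ region n a b c ∧ y + b + 1 = n := by
  simp [capY]

@[simp]
theorem mem_capZ : (x, y, z) ∈ capZ n a b c ↔ (x, y, z) ∈ region n a b c ∧ z + c + 1 = n := by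
  simp [capZ]

theorem map_rotate_capX (n a b c : ℕ) :
    (capX n a b c).map rotate.toEmbedding = capZ n b c a := by
  ext ⟨y, z, x⟩
  simp only [mem_map_rotate, mem_capX, mem_capZ, mem_region]
  omega

theorem map_rotate_capY (n a b c : ℕ) :
    (capY n a b c).map rotate.toEmbedding = capX n b c a := by
  ext ⟨y, z, x⟩
  simp only [mem_map_rotate, mem_capX, mem_capY, mem_region]
  omega

theorem mem_pattern_of_half_eq (hq : (x, y, z) ∈ pattern n a b c i j k)
    (hq' : (x', y', z') ∈ region n a b c) (hx : (i + x') / 2 = (i + x) / 2)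
    (hy : (j + y') / 2 = (j + y) / 2) (hz : (k + z') / 2 = (k + z) / 2)
    (hlow : (i + x') % 2 + (j + y') % 2 + (k + z') % 2 ≤ 1) :
    (x', y', z') ∈ pattern n a b c i j k := by
  rw [mem_pattern, isFilled_iff_half] at hq ⊢
  rw [hx, hy, hz]
  exact ⟨hq', hq.2.1, hlow⟩

theorem low_bits_le_one_of_mem_pattern (hq : (x, y, z) ∈ pattern n a b c i j k) :
    (i + x) % 2 + (j + y) % 2 + (k + z) % 2 ≤ 1 :=
  ((isFilled_iff_half _ _ _).1 (mem_pattern.1 hq).2).2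

theorem low_bits_le_one_of_subset
    (hsub : pattern n a b c i j k ⊆ pattern n a b c i' j' k')
    (hq : (x, y, z) ∈ pattern n a b c i j k) (hq' : (x', y', z') ∈ region n a b c)
    (hx : (i + x') / 2 = (i + x) / 2) (hy : (j + y') / 2 = (j + y) / 2)
    (hz : (k + z') / 2 = (k + z) / 2) (hlow : (i + x') % 2 + (j + y') % 2 + (k + z') % 2 ≤ 1) :
    (i' + x') % 2 + (j' + y') % 2 + (k' + z') % 2 ≤ 1 :=
  low_bits_le_one_of_mem_pattern (hsub (mem_pattern_of_half_eq hq hq' hx hy hz hlow))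

theorem low_bits_of_mem_pattern (hp : pattern n a b c i j k = pattern n a b c i' j' k')
    (hi : i % 2 ≠ i' % 2) (hj : j % 2 ≠ j' % 2)
    (hq : (x, y, z) ∈ pattern n a b c i j k) :
    (k + z) % 2 = 0 ∧ (i + x) % 2 ≠ (j + y) % 2 := by
  have hlow := low_bits_le_one_of_mem_pattern hq
  have hlow' := low_bits_le_one_of_mem_pattern (hp ▸ hq)
  omega

-- If a filled cell were not in the cap, its substitution block would contain a cell of the next row
-- towards the third corner which is filled according to one position and not to the other.
theorem pattern_subset_capZ (hp : pattern n a b c i j k = pattern n a b c i' j' k')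
    (hi : i % 2 ≠ i' % 2) (hj : j % 2 ≠ j' % 2) (hk : k % 2 = k' % 2) :
    pattern n a b c i j k ⊆ capZ n a b c := by
  rintro ⟨x, y, z⟩ hq
  have hq' := hp ▸ hq
  have hreg := (mem_pattern.1 hq).1
  have hbits := low_bits_of_mem_pattern hp hi hj hq
  rw [mem_capZ]
  refine ⟨hreg, ?_⟩
  by_contra hcap
  rw [mem_region] at hreg
  have hodd : (1 ≤ x ∧ (i + x) % 2 = 1) ∨ (1 ≤ x ∧ (i' + x) % 2 = 1) ∨
      (1 ≤ y ∧ (j + y) % 2 = 1) ∨ (1 ≤ y ∧ (j' + y) % 2 = 1) := by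
    have hxy : 1 ≤ x ∨ 1 ≤ y := by omega
    clear hreg hcap hbits hk
    omega
  obtain h | h | h | h := hodd
  · have := low_bits_le_one_of_subset hp.subset hq (x' := x - 1) (y' := y) (z' := z + 1)
      (mem_region.2 (by omega)) (by omega) rfl (by omega) (by omega)
    omega
  · have := low_bits_le_one_of_subset hp.superset hq' (x' := x - 1) (y' := y) (z' := z + 1)
      (mem_region.2 (by omega)) (by omega) rfl (by omega) (by omega)
    omega
  · have := low_bits_le_one_of_subset hp.subset hq (x' := x) (y' := y - 1) (z' := z + 1)
      (mem_region.2 (by omega)) rfl (by omega) (by omega) (by omega)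
    omega
  · have := low_bits_le_one_of_subset hp.superset hq' (x' := x) (y' := y - 1) (z' := z + 1)
      (mem_region.2 (by omega)) rfl (by omega) (by omega) (by omega)
    omega

-- Two adjacent cells of the cap lie in the same substitution block for one of the two positions.
theorem capZ_subset_pattern (hc : c ≤ 1) (hp : pattern n a b c i j k = pattern n a b c i' j' k')
    (hi : i % 2 ≠ i' % 2) (hj : j % 2 ≠ j' % 2) (hk : k % 2 = k' % 2)
    (hq : (x, y, z) ∈ pattern n a b c i j k) :
    capZ n a b c ⊆ pattern n a b c i j k := by
  rintro ⟨x', y', z'⟩ hcap'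
  have hq' := hp ▸ hq
  have hbits := low_bits_of_mem_pattern hp hi hj hq
  have hcap := pattern_subset_capZ hp hi hj hk hq
  have hreg := (mem_capZ.1 hcap').1
  have hz : z' = z := by simp only [mem_capZ] at hcap hcap'; omega
  have hadj : (x' = x ∧ y' = y) ∨ (x' = x + 1 ∧ y = y' + 1) ∨ (x = x' + 1 ∧ y' = y + 1) := by
    simp only [mem_capZ, mem_region] at hcap hcap'
    omega
  have hblock : ((i + x') / 2 = (i + x) / 2 ∧ (j + y') / 2 = (j + y) / 2 ∧
        (i + x') % 2 + (j + y') % 2 + (k + z') % 2 ≤ 1) ∨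
      ((i' + x') / 2 = (i' + x) / 2 ∧ (j' + y') / 2 = (j' + y) / 2 ∧
        (i' + x') % 2 + (j' + y') % 2 + (k' + z') % 2 ≤ 1) := by
    subst hz
    clear hcap hcap' hreg hc
    obtain h | h := Nat.mod_two_eq_zero_or_one (i + x) <;>
      obtain ⟨rfl, rfl⟩ | ⟨rfl, rfl⟩ | ⟨rfl, rfl⟩ := hadj <;>
      first | (left; omega) | (right; omega)
  obtain ⟨hx, hy, hlow⟩ | ⟨hx, hy, hlow⟩ := hblock
  · exact mem_pattern_of_half_eq hq hreg hx hy (by rw [hz]) hlow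
  · exact hp ▸ mem_pattern_of_half_eq hq' hreg hx hy (by rw [hz]) hlow

theorem eq_empty_or_eq_capZ {α β γ α' β' γ' : ℕ} (hc : c ≤ 1) {S : Finset (ℕ × ℕ × ℕ)}
    (hS : S ∈ patternsMod n a b c α β γ) (hS' : S ∈ patternsMod n a b c α' β' γ')
    (hα : α ≠ α') (hβ : β ≠ β') (hγ : γ = γ') : S = ∅ ∨ S = capZ n a b c := by
  obtain ⟨i, j, k, -, rfl, rfl, rfl, rfl⟩ := hS
  obtain ⟨i', j', k', -, rfl, rfl, rfl, hp⟩ := hS'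
  obtain hempty | ⟨⟨x, y, z⟩, hq⟩ := (pattern n a b c i j k).eq_empty_or_nonempty
  · exact Or.inl hempty
  · exact Or.inr ((pattern_subset_capZ hp hα hβ hγ).antisymm
      (capZ_subset_pattern hc hp hα hβ hγ hq))

theorem eq_empty_or_eq_capX {α β γ α' β' γ' : ℕ} (ha : a ≤ 1) {S : Finset (ℕ × ℕ × ℕ)}
    (hS : S ∈ patternsMod n a b c α β γ) (hS' : S ∈ patternsMod n a b c α' β' γ')
    (hα : α = α') (hβ : β ≠ β') (hγ : γ ≠ γ') : S = ∅ ∨ S = capX n a b c := by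
  rw [← map_rotate_mem_patternsMod] at hS hS'
  simpa only [← map_rotate_capX, Finset.map_inj, Finset.map_eq_empty] using
    eq_empty_or_eq_capZ ha hS hS' hβ hγ hα

theorem eq_empty_or_eq_capY {α β γ α' β' γ' : ℕ} (hb : b ≤ 1) {S : Finset (ℕ × ℕ × ℕ)}
    (hS : S ∈ patternsMod n a b c α β γ) (hS' : S ∈ patternsMod n a b c α' β' γ')
    (hα : α ≠ α') (hβ : β = β') (hγ : γ ≠ γ') : S = ∅ ∨ S = capY n a b c := by
  rw [← map_rotate_mem_patternsMod] at hS hS'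
  simpa only [← map_rotate_capY, Finset.map_inj, Finset.map_eq_empty] using
    eq_empty_or_eq_capX hb hS hS' hβ hγ hα

end Caps

section Occurrences

variable {n a b c α β γ : ℕ}

theorem empty_mem_patternsMod (hα : α ≤ 1) (hβ : β ≤ 1) (hγ : γ ≤ 1)
    (hpar : (α + β + γ + n) % 2 = 0) : ∅ ∈ patternsMod n a b c α β γ := by
  have hlt : n < 2 ^ n := Nat.lt_two_pow_self
  have hpow₂ : 2 ^ (n + 2) = 2 * 2 ^ (n + 1) := pow_succ' 2 (n + 1)
  have hpow₃ : 2 ^ (n + 3) = 2 * 2 ^ (n + 2) := pow_succ' 2 (n + 2)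
  -- At this position every first and every third coordinate has the binary digit `2 ^ (n + 1)`.
  refine ⟨2 ^ (n + 1) + α, 2 ^ (n + 2) - (n + α + γ), 2 ^ (n + 1) + γ, ⟨n + 3, by omega⟩,
    by omega, by omega, by omega, ?_⟩
  refine (Finset.eq_empty_of_forall_notMem ?_).symm
  rintro ⟨x, y, z⟩ hq
  obtain ⟨hreg, -, -, hki⟩ := mem_pattern.1 hq
  rw [mem_region] at hreg
  exact land_ne_zero_of_two_pow_le (N := n + 1) (by omega) (by omega) (by omega) (by omega) hki

theorem capZ_mem_patternsMod (hα : α ≤ 1) (hβ : β ≤ 1) (hγ : γ ≤ 1)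
    (hpar : (α + β + γ + n) % 2 = 0) (hc : c < n) (hcap : (γ + n + c) % 2 = 1) :
    capZ n a b c ∈ patternsMod n a b c α β γ := by
  have hlt : n < 2 ^ n := Nat.lt_two_pow_self
  have hpow₂ : 2 ^ (n + 2) = 2 * 2 ^ (n + 1) := pow_succ' 2 (n + 1)
  have hpow₃ : 2 ^ (n + 3) = 2 * 2 ^ (n + 2) := pow_succ' 2 (n + 2)
  -- At this position the third coordinate is `2 ^ (n + 2)` on the cap and has the binary digit
  -- `2 ^ (n + 1)` elsewhere, while the first one always has the digit `2 ^ (n + 1)`.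
  refine ⟨2 ^ (n + 1) + α, 2 ^ (n + 1) - (α + c + 1), 2 ^ (n + 2) - (n - 1 - c),
    ⟨n + 3, by omega⟩, by omega, by omega, by omega, ?_⟩
  ext ⟨x, y, z⟩
  rw [mem_capZ, mem_pattern]
  refine and_congr_right fun hreg => ?_
  rw [mem_region] at hreg
  constructor
  · intro hz
    have hk : 2 ^ (n + 2) - (n - 1 - c) + z = 2 ^ (n + 2) := by omega
    rw [isFilled_rotate, isFilled_iff_land_eq_zero (N := n + 3) (by omega), hk]
    exact two_pow_land_eq_zero (by omega)
  · rintro ⟨-, -, hki⟩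
    by_contra hz
    exact land_ne_zero_of_two_pow_le (N := n + 1) (by omega) (by omega) (by omega) (by omega) hki

theorem capZ_notMem_patternsMod (ha : a + 1 < n) (hbc : b + c < n) (hc : c + 1 < n)
    (hcap : (γ + n + c) % 2 = 0) : capZ n a b c ∉ patternsMod n a b c α β γ := by
  rintro ⟨i, j, k, -, -, -, rfl, hp⟩
  have hcell : (0, c, n - 1 - c) ∈ capZ n a b c := by
    simp only [mem_capZ, mem_region]
    omega
  rw [hp] at hcell
  have hlow := low_bits_le_one_of_mem_pattern hcell
  have hnext : (1, c, n - 2 - c) ∈ pattern n a b c i j k :=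
    mem_pattern_of_half_eq hcell (mem_region.2 (by omega)) (by omega) rfl (by omega) (by omega)
  rw [← hp, mem_capZ] at hnext
  omega

theorem capZ_mem_patternsMod_iff (hα : α ≤ 1) (hβ : β ≤ 1) (hγ : γ ≤ 1)
    (hpar : (α + β + γ + n) % 2 = 0) (ha : a + 1 < n) (hbc : b + c < n) (hc : c + 1 < n) :
    capZ n a b c ∈ patternsMod n a b c α β γ ↔ (γ + n + c) % 2 = 1 := by
  refine ⟨fun h => ?_, capZ_mem_patternsMod hα hβ hγ hpar (by omega)⟩
  by_contra hcap
  exact capZ_notMem_patternsMod ha hbc hc (by omega) h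

end Occurrences

section Classes

/-- The parity classes of the positions of triangles of side `n`. -/
def classes (n : ℕ) : Finset (ℕ × ℕ × ℕ) :=
  {ε ∈ Finset.range 2 ×ˢ Finset.range 2 ×ˢ Finset.range 2 | (ε.1 + ε.2.1 + ε.2.2 + n) % 2 = 0}

variable {n a b c α β γ : ℕ}

@[simp]
theorem mem_classes :
    (α, β, γ) ∈ classes n ↔ (α ≤ 1 ∧ β ≤ 1 ∧ γ ≤ 1) ∧ (α + β + γ + n) % 2 = 0 := by
  simp [classes]

theorem classes_eq (n : ℕ) : classes n =
    {(n % 2, 0, 0), (n % 2, 1, 1), (1 - n % 2, 0, 1), (1 - n % 2, 1, 0)} := by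
  ext ⟨α, β, γ⟩
  simp only [mem_classes, Finset.mem_insert, Finset.mem_singleton, Prod.mk.injEq]
  omega

theorem sum_classes (n : ℕ) (f : ℕ × ℕ × ℕ → ℕ) : ∑ ε ∈ classes n, f ε =
    f (n % 2, 0, 0) + f (n % 2, 1, 1) + f (1 - n % 2, 0, 1) + f (1 - n % 2, 1, 0) := by
  rw [classes_eq]
  obtain h | h := Nat.mod_two_eq_zero_or_one n <;> simp [h, add_assoc]

theorem card_classes_filter_third (n m : ℕ) :
    ((classes n).filter fun ε => (ε.2.2 + m) % 2 = 1).card = 2 := by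
  rw [Finset.card_filter, sum_classes]
  simp only
  split_ifs <;> omega

end Classes

section Multiplicity

variable {n a b c : ℕ} {S : Finset (ℕ × ℕ × ℕ)}

/-- The three patterns in which exactly the cells at one of the corners are filled. -/
def caps (n a b c : ℕ) : Finset (Finset (ℕ × ℕ × ℕ)) := {capX n a b c, capY n a b c, capZ n a b c}

/-- The parity classes of the positions where the pattern `S` occurs. -/
noncomputable def classesOf (n a b c : ℕ) (S : Finset (ℕ × ℕ × ℕ)) : Finset (ℕ × ℕ × ℕ) :=
  open Classical in {ε ∈ classes n | S ∈ patternsMod n a b c ε.1 ε.2.1 ε.2.2}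

@[simp]
theorem mem_classesOf {α β γ : ℕ} :
    (α, β, γ) ∈ classesOf n a b c S ↔
      (α, β, γ) ∈ classes n ∧ S ∈ patternsMod n a b c α β γ := by
  simp [classesOf]

theorem card_classesOf_empty (n a b c : ℕ) : (classesOf n a b c ∅).card = 4 := by
  have heq : classesOf n a b c ∅ = classes n := by
    ext ⟨α, β, γ⟩
    simp only [mem_classesOf, mem_classes, and_iff_left_iff_imp]
    rintro ⟨⟨hα, hβ, hγ⟩, hpar⟩
    exact empty_mem_patternsMod hα hβ hγ hpar
  rw [heq, Finset.card_eq_sum_ones, sum_classes]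

theorem map_rotate_classesOf (n a b c : ℕ) (S : Finset (ℕ × ℕ × ℕ)) :
    (classesOf n a b c S).map rotate.toEmbedding =
      classesOf n b c a (S.map rotate.toEmbedding) := by
  ext ⟨β, γ, α⟩
  simp only [mem_map_rotate, mem_classesOf, mem_classes, map_rotate_mem_patternsMod]
  refine and_congr_left' ?_
  omega

theorem card_classesOf_map_rotate (n a b c : ℕ) (S : Finset (ℕ × ℕ × ℕ)) :
    (classesOf n b c a (S.map rotate.toEmbedding)).card = (classesOf n a b c S).card := by
  rw [← map_rotate_classesOf, Finset.card_map]

theorem card_classesOf_capZ (ha : a + 1 < n) (hbc : b + c < n) (hc : c + 1 < n) :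
    (classesOf n a b c (capZ n a b c)).card = 2 := by
  rw [← card_classes_filter_third n (n + c)]
  congr 1
  ext ⟨α, β, γ⟩
  simp only [mem_classesOf, Finset.mem_filter, ← add_assoc]
  refine and_congr_right fun hε => ?_
  obtain ⟨⟨hα, hβ, hγ⟩, hpar⟩ := mem_classes.1 hε
  exact capZ_mem_patternsMod_iff hα hβ hγ hpar ha hbc hc

theorem card_classesOf_capX (ha : a + 1 < n) (hb : b + 1 < n) (hca : c + a < n) :
    (classesOf n a b c (capX n a b c)).card = 2 := by
  rw [← card_classesOf_map_rotate, map_rotate_capX]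
  exact card_classesOf_capZ hb hca ha

theorem card_classesOf_capY (hab : a + b < n) (hb : b + 1 < n) (hc : c + 1 < n) :
    (classesOf n a b c (capY n a b c)).card = 2 := by
  rw [← card_classesOf_map_rotate, map_rotate_capY]
  exact card_classesOf_capX hb hc hab

theorem card_classesOf_of_notMem_caps (hn : 2 ≤ n) (ha : a ≤ 1) (hb : b ≤ 1) (hc : c ≤ 1)
    (hS : S ∈ patterns n a b c) (hne : S ≠ ∅) (hcap : S ∉ caps n a b c) :
    (classesOf n a b c S).card = 1 := by
  simp only [caps, Finset.mem_insert, Finset.mem_singleton, not_or] at hcap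
  rw [Finset.card_eq_one]
  obtain ⟨i, j, k, hpos, hp⟩ := hS
  have heven := hpos.even_sum hn
  have hmod : S ∈ patternsMod n a b c (i % 2) (j % 2) (k % 2) :=
    ⟨i, j, k, hpos, rfl, rfl, rfl, hp⟩
  refine ⟨(i % 2, j % 2, k % 2), Finset.eq_singleton_iff_unique_mem.2 ⟨?_, ?_⟩⟩
  · rw [mem_classesOf, mem_classes]
    exact ⟨by omega, hmod⟩
  rintro ⟨α, β, γ⟩ hε
  obtain ⟨hε, hmod'⟩ := mem_classesOf.1 hε
  rw [mem_classes] at hε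
  have hX : ¬(α = i % 2 ∧ β ≠ j % 2 ∧ γ ≠ k % 2) := fun ⟨hα, hβ, hγ⟩ =>
    (eq_empty_or_eq_capX ha hmod' hmod hα hβ hγ).elim hne hcap.1
  have hY : ¬(α ≠ i % 2 ∧ β = j % 2 ∧ γ ≠ k % 2) := fun ⟨hα, hβ, hγ⟩ =>
    (eq_empty_or_eq_capY hb hmod' hmod hα hβ hγ).elim hne hcap.2.1
  have hZ : ¬(α ≠ i % 2 ∧ β ≠ j % 2 ∧ γ = k % 2) := fun ⟨hα, hβ, hγ⟩ =>
    (eq_empty_or_eq_capZ hc hmod' hmod hα hβ hγ).elim hne hcap.2.2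
  rw [Prod.mk.injEq, Prod.mk.injEq]
  omega

theorem mem_patterns_of_card_classesOf_pos (h : 0 < (classesOf n a b c S).card) :
    S ∈ patterns n a b c := by
  obtain ⟨⟨α, β, γ⟩, hε⟩ := Finset.card_pos.1 h
  exact patternsMod_subset_patterns α β γ (mem_classesOf.1 hε).2

theorem exists_mem_capX_notMem_capY (hb : b + 1 < n) (hca : c + a < n) :
    ∃ q ∈ capX n a b c, q ∉ capY n a b c := by
  refine ⟨(n - 1 - a, 0, a), ?_⟩
  simp only [mem_capX, mem_capY, mem_region]
  omega

theorem exists_mem_capY_notMem_capZ (hab : a + b < n) (hc : c + 1 < n) :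
    ∃ q ∈ capY n a b c, q ∉ capZ n a b c := by
  refine ⟨(b, n - 1 - b, 0), ?_⟩
  simp only [mem_capY, mem_capZ, mem_region]
  omega

theorem exists_mem_capZ_notMem_capX (ha : a + 1 < n) (hbc : b + c < n) :
    ∃ q ∈ capZ n a b c, q ∉ capX n a b c := by
  refine ⟨(0, c, n - 1 - c), ?_⟩
  simp only [mem_capX, mem_capZ, mem_region]
  omega

theorem card_caps (hn : 3 ≤ n) (ha : a ≤ 1) (hb : b ≤ 1) (hc : c ≤ 1) :
    (caps n a b c).card = 3 := by
  obtain ⟨q, hqX, hqY⟩ := exists_mem_capX_notMem_capY (n := n) (a := a) (b := b) (c := c)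
    (by omega) (by omega)
  obtain ⟨r, hrY, hrZ⟩ := exists_mem_capY_notMem_capZ (n := n) (a := a) (b := b) (c := c)
    (by omega) (by omega)
  obtain ⟨s, hsZ, hsX⟩ := exists_mem_capZ_notMem_capX (n := n) (a := a) (b := b) (c := c)
    (by omega) (by omega)
  exact Finset.card_eq_three.2 ⟨_, _, _, ne_of_mem_of_not_mem' hqX hqY,
    (ne_of_mem_of_not_mem' hsZ hsX).symm, ne_of_mem_of_not_mem' hrY hrZ, rfl⟩

theorem card_classesOf_of_mem_caps (hn : 3 ≤ n) (ha : a ≤ 1) (hb : b ≤ 1) (hc : c ≤ 1)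
    (hS : S ∈ caps n a b c) : (classesOf n a b c S).card = 2 := by
  simp only [caps, Finset.mem_insert, Finset.mem_singleton] at hS
  obtain rfl | rfl | rfl := hS
  · exact card_classesOf_capX (by omega) (by omega) (by omega)
  · exact card_classesOf_capY (by omega) (by omega) (by omega)
  · exact card_classesOf_capZ (by omega) (by omega) (by omega)

theorem empty_notMem_caps (hn : 3 ≤ n) (ha : a ≤ 1) (hb : b ≤ 1) (hc : c ≤ 1) :
    ∅ ∉ caps n a b c := fun h => by
  simpa only [card_classesOf_empty, OfNat.ofNat_eq_ofNat, Nat.reduceEqDiff] using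
    card_classesOf_of_mem_caps hn ha hb hc h

theorem insert_empty_caps_subset_patterns (hn : 3 ≤ n) (ha : a ≤ 1) (hb : b ≤ 1) (hc : c ≤ 1) :
    ↑(insert ∅ (caps n a b c)) ⊆ patterns n a b c := fun S hS => by
  apply mem_patterns_of_card_classesOf_pos
  obtain rfl | hS := Finset.mem_insert.1 hS
  · simp [card_classesOf_empty]
  · simp [card_classesOf_of_mem_caps hn ha hb hc hS]

theorem card_insert_empty_caps (hn : 3 ≤ n) (ha : a ≤ 1) (hb : b ≤ 1) (hc : c ≤ 1) :
    (insert ∅ (caps n a b c)).card = 4 := by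
  rw [Finset.card_insert_of_notMem (empty_notMem_caps hn ha hb hc), card_caps hn ha hb hc]

theorem sum_card_classesOf (hn : 3 ≤ n) (ha : a ≤ 1) (hb : b ≤ 1) (hc : c ≤ 1) :
    ∑ S ∈ (patterns_finite n a b c).toFinset, (classesOf n a b c S).card =
      (patterns n a b c).ncard + 6 := by
  have hsub : insert ∅ (caps n a b c) ⊆ (patterns_finite n a b c).toFinset :=
    Set.Finite.subset_toFinset.2 (insert_empty_caps_subset_patterns hn ha hb hc)
  have hspecial : ∑ S ∈ insert ∅ (caps n a b c), (classesOf n a b c S).card = 10 := by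
    rw [Finset.sum_insert (empty_notMem_caps hn ha hb hc), card_classesOf_empty,
      Finset.sum_const_nat fun S hS => card_classesOf_of_mem_caps hn ha hb hc hS,
      card_caps hn ha hb hc]
  have hgeneric : ∀ S ∈ (patterns_finite n a b c).toFinset \ insert ∅ (caps n a b c),
      (classesOf n a b c S).card = 1 := fun S hS => by
    simp only [Finset.mem_sdiff, Set.Finite.mem_toFinset, Finset.mem_insert, not_or] at hS
    exact card_classesOf_of_notMem_caps (by omega) ha hb hc hS.1 hS.2.1 hS.2.2
  have hcard := Finset.card_sdiff_add_card_eq_card hsub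
  rw [card_insert_empty_caps hn ha hb hc] at hcard
  rw [← Finset.sum_sdiff hsub, hspecial, Finset.sum_const_nat hgeneric,
    Set.ncard_eq_toFinset_card _ (patterns_finite n a b c)]
  omega

theorem sum_ncard_patternsMod (hn : 3 ≤ n) (ha : a ≤ 1) (hb : b ≤ 1) (hc : c ≤ 1) :
    ∑ ε ∈ classes n, (patternsMod n a b c ε.1 ε.2.1 ε.2.2).ncard =
      (patterns n a b c).ncard + 6 := by
  classical
  rw [← sum_card_classesOf hn ha hb hc]
  unfold classesOf
  simp only [Finset.card_filter]
  rw [Finset.sum_comm]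
  refine Finset.sum_congr rfl fun ε _ => ?_
  rw [← Finset.card_filter, ← Set.ncard_coe_finset]
  congr 1
  ext S
  simpa using fun h => patternsMod_subset_patterns _ _ _ h

end Multiplicity

section Counting

variable {n a b c : ℕ}

theorem region_subset_region_zero (n a b c : ℕ) : region n a b c ⊆ region n 0 0 0 := by
  rintro ⟨x, y, z⟩ hq
  rw [mem_region] at hq ⊢
  omega

theorem pattern_eq_inter_region (n a b c i j k : ℕ) :
    pattern n a b c i j k = pattern n 0 0 0 i j k ∩ region n a b c := by
  ext ⟨x, y, z⟩
  rw [Finset.mem_inter, mem_pattern, mem_pattern]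
  have := @region_subset_region_zero n a b c (x, y, z)
  tauto

theorem patterns_two_eq_powerset (a b c : ℕ) :
    patterns 2 a b c = (region 2 a b c).powerset := by
  have hfull : ∀ S ∈ (region 2 0 0 0).powerset,
      ∃ i < 5, ∃ j < 5, ∃ k < 5, i + j + k + 2 = 2 ^ 3 ∧ S = pattern 2 0 0 0 i j k := by
    decide
  ext S
  rw [Finset.coe_powerset, Set.mem_preimage, Set.mem_powerset_iff, Finset.coe_subset]
  refine ⟨subset_region_of_mem_patterns, fun hS => ?_⟩
  obtain ⟨i, -, j, -, k, -, hpos, rfl⟩ :=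
    hfull S (Finset.mem_powerset.2 (hS.trans (region_subset_region_zero 2 a b c)))
  refine ⟨i, j, k, ⟨3, hpos⟩, ?_⟩
  exact ((pattern_eq_inter_region 2 a b c i j k).trans (Finset.inter_eq_left.2 hS)).symm

theorem patterns_three_one_one_one : patterns 3 1 1 1 = ↑(insert ∅ (caps 3 1 1 1)) := by
  refine subset_antisymm ?_
    (insert_empty_caps_subset_patterns le_rfl le_rfl le_rfl le_rfl)
  rintro _ ⟨i, j, k, ⟨N, hN⟩, rfl⟩
  have hregion : region 3 1 1 1 = {(1, 1, 0), (1, 0, 1), (0, 1, 1)} := by decide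
  have hX : capX 3 1 1 1 = {(1, 1, 0), (1, 0, 1)} := by decide
  have hY : capY 3 1 1 1 = {(1, 1, 0), (0, 1, 1)} := by decide
  have hZ : capZ 3 1 1 1 = {(1, 0, 1), (0, 1, 1)} := by decide
  have hpascal := isFilled_pascal hN
  rw [pattern, hregion, caps, hX, hY, hZ]
  by_cases h₁ : IsFilled (i + 1) j (k + 1) <;> by_cases h₂ : IsFilled i (j + 1) (k + 1) <;>
    simp [Finset.filter_insert, Finset.filter_singleton, hpascal, h₁, h₂]

theorem ncard_patterns_three_one_one_one : (patterns 3 1 1 1).ncard = 4 := by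
  rw [patterns_three_one_one_one, Set.ncard_coe_finset,
    card_insert_empty_caps le_rfl le_rfl le_rfl le_rfl]

theorem ncard_patterns_two (ha : a ≤ 1) (hb : b ≤ 1) (hc : c ≤ 1) :
    (patterns 2 a b c).ncard = 2 ^ (3 - (a + b + c)) := by
  rw [patterns_two_eq_powerset, Set.ncard_coe_finset, Finset.card_powerset]
  congr 1
  interval_cases a <;> interval_cases b <;> interval_cases c <;> decide

theorem ncard_patterns_add_six (hn : 3 ≤ n) (ha : a ≤ 1) (hb : b ≤ 1) (hc : c ≤ 1) :
    (patterns n a b c).ncard + 6 =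
      ∑ ε ∈ classes n, (patterns ((n + ε.1 + ε.2.1 + ε.2.2) / 2) ((a + ε.2.1 + ε.2.2) / 2)
        ((b + ε.2.2 + ε.1) / 2) ((c + ε.1 + ε.2.1) / 2)).ncard := by
  rw [← sum_ncard_patternsMod hn ha hb hc]
  refine Finset.sum_congr rfl ?_
  rintro ⟨α, β, γ⟩ hε
  obtain ⟨⟨hα, hβ, hγ⟩, hpar⟩ := mem_classes.1 hε
  exact ncard_patternsMod (by omega) (by omega) hα hβ hγ hpar

theorem ncard_patterns_two_mul {m : ℕ} (hm : 2 ≤ m) (ha : a ≤ 1) (hb : b ≤ 1) (hc : c ≤ 1) :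
    (patterns (2 * m) a b c).ncard + 6 =
      (patterns m 0 0 0).ncard + (patterns (m + 1) 1 b c).ncard +
        (patterns (m + 1) a 1 c).ncard + (patterns (m + 1) a b 1).ncard := by
  have half (d : ℕ) (hd : d ≤ 1) : d / 2 = 0 ∧ (d + 1) / 2 = d := by omega
  rw [ncard_patterns_add_six (by omega) ha hb hc, sum_classes]
  simp [half, ha, hb, hc, add_assoc]

theorem ncard_patterns_two_mul_add_one {m : ℕ} (hm : 1 ≤ m)
    (ha : a ≤ 1) (hb : b ≤ 1) (hc : c ≤ 1) :
    (patterns (2 * m + 1) a b c).ncard + 6 =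
      (patterns (m + 2) 1 1 1).ncard + (patterns (m + 1) 0 b c).ncard +
        (patterns (m + 1) a 0 c).ncard + (patterns (m + 1) a b 0).ncard := by
  have half (d : ℕ) (hd : d ≤ 1) : d / 2 = 0 ∧ (d + 1) / 2 = d ∧ (d + 1 + 1) / 2 = 1 := by omega
  have hside : (2 * m + 1 + 1) / 2 = m + 1 ∧ (2 * m + 1 + 1 + 1 + 1) / 2 = m + 2 := by omega
  rw [ncard_patterns_add_six (by omega) ha hb hc, sum_classes]
  simp only [Nat.mul_add_mod, Nat.one_mod, half, hside, ha, hb, hc, add_zero, Nat.sub_self]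
  ring

theorem ncard_patterns (hn : 2 ≤ n) (ha : a ≤ 1) (hb : b ≤ 1) (hc : c ≤ 1) {g : ℤ}
    (hg : g = 2 * n - a - b - c) (hg₂ : 2 ≤ g) :
    ((patterns n a b c).ncard : ℤ) = g ^ 2 - 3 * g + 4 := by
  induction n using Nat.strong_induction_on generalizing a b c g with
  | _ n ih =>
  have sq_eq_self (d : ℕ) (hd : d ≤ 1) : (d : ℤ) ^ 2 = d := by interval_cases d <;> rfl
  obtain rfl | hn₃ : n = 2 ∨ 3 ≤ n := by omega
  · rw [ncard_patterns_two ha hb hc, hg]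
    interval_cases a <;> interval_cases b <;> interval_cases c <;> first | rfl | omega
  obtain ⟨m, rfl | rfl⟩ := Nat.even_or_odd' n
  · have hrec := ncard_patterns_two_mul (m := m) (by omega) ha hb hc
    have h₀ := ih m (by omega) (by omega) zero_le_one zero_le_one zero_le_one rfl (by omega)
    have hX := ih (m + 1) (by omega) (by omega) le_rfl hb hc rfl (by omega)
    have hY := ih (m + 1) (by omega) (by omega) ha le_rfl hc rfl (by omega)
    have hZ := ih (m + 1) (by omega) (by omega) ha hb le_rfl rfl (by omega)
    zify at hrec
    push_cast at hg h₀ hX hY hZ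
    subst hg
    linear_combination hrec + h₀ + hX + hY + hZ +
      sq_eq_self a ha + sq_eq_self b hb + sq_eq_self c hc
  · have hrec := ncard_patterns_two_mul_add_one (m := m) (by omega) ha hb hc
    have h₁ : ((patterns (m + 2) 1 1 1).ncard : ℤ) = (2 * m + 1) ^ 2 - 3 * (2 * m + 1) + 4 := by
      obtain rfl | hm : m = 1 ∨ 2 ≤ m := by omega
      · rw [ncard_patterns_three_one_one_one]
        rfl
      · exact ih (m + 2) (by omega) (by omega) le_rfl le_rfl le_rfl (by push_cast; ring)
          (by omega)
    have hX := ih (m + 1) (by omega) (by omega) zero_le_one hb hc rfl (by omega)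
    have hY := ih (m + 1) (by omega) (by omega) ha zero_le_one hc rfl (by omega)
    have hZ := ih (m + 1) (by omega) (by omega) ha hb zero_le_one rfl (by omega)
    zify at hrec
    push_cast at hg hX hY hZ
    subst hg
    linear_combination hrec + h₁ + hX + hY + hZ +
      sq_eq_self a ha + sq_eq_self b hb + sq_eq_self c hc

end Counting

section TopCut

/-- The top-cut pattern of size `n` whose filled cells form the set `S`. The unit `(r, 2j)` of
the pattern has barycentric coordinates `(r - j, j, n - 1 - r)`. -/
def topCutOfCells (n : ℕ) (S : Finset (ℕ × ℕ × ℕ)) : ℕ × ℕ → Bool := fun q =>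
  decide (q.2 % 2 = 0 ∧ q.2 ≤ 2 * q.1 ∧ (q.1 - q.2 / 2, q.2 / 2, n - 1 - q.1) ∈ S)

variable {n : ℕ}

theorem topCutPattern_eq_topCutOfCells {i j k : ℕ} (hpos : IsPosition n i j k) :
    topCutPattern n (i + j) (2 * j) = topCutOfCells n (pattern n 0 0 1 i j k) := by
  obtain ⟨N, hN⟩ := hpos
  funext ⟨r, c⟩
  by_cases hc : c % 2 = 0
  swap
  · have : (2 * j + c) % 2 ≠ 0 := by omega
    simp [topCutPattern, topCutOfCells, filled, hc]
  obtain ⟨y, rfl⟩ : 2 ∣ c := Nat.dvd_of_mod_eq_zero hc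
  have hregion : 2 * y ≤ 2 * r ∧ (r - y, y, n - 1 - r) ∈ region n 0 0 1 ↔
      1 ≤ r ∧ r < n ∧ 2 * y ≤ 2 * r := by
    rw [mem_region]
    omega
  have hfilled (hr : r < n ∧ 2 * y ≤ 2 * r) : filled (i + j + r) (2 * j + 2 * y) =
      decide (IsFilled (i + (r - y)) (j + y) (k + (n - 1 - r))) := by
    rw [← filled_eq_decide_isFilled (N := N) (by omega), mul_add]
    congr 1
    omega
  by_cases hr : 1 ≤ r ∧ r < n ∧ 2 * y ≤ 2 * r
  · simp [topCutPattern, topCutOfCells, -mem_region, hr, hfilled hr.2, (hregion.2 hr).2]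
  · have hout (hy : y ≤ r) : (r - y, y, n - 1 - r) ∉ region n 0 0 1 := fun hmem =>
      hr (hregion.1 ⟨by omega, hmem⟩)
    simp only [topCutPattern, hr, if_false]
    simpa [topCutOfCells, -mem_region] using fun hy hmem => absurd hmem (hout hy)

theorem topCutOfCells_injOn (n : ℕ) :
    Set.InjOn (topCutOfCells n) {S | S ⊆ region n 0 0 1} := by
  have mem_iff {S : Finset (ℕ × ℕ × ℕ)} {x y z : ℕ} (hq : x + y + z + 1 = n) :
      (x, y, z) ∈ S ↔ topCutOfCells n S (x + y, 2 * y) = true := by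
    have hz : n - 1 - (x + y) = z := by omega
    simp [topCutOfCells, hz]
  intro S hS S' hS' h
  ext ⟨x, y, z⟩
  by_cases hq : x + y + z + 1 = n
  · rw [mem_iff hq, mem_iff hq, h]
  · have hout : (x, y, z) ∉ region n 0 0 1 := fun hreg => hq (mem_region.1 hreg).2
    exact iff_of_false (fun hmem => hout (hS hmem)) fun hmem => hout (hS' hmem)

theorem ptopCut_eq_image (n : ℕ) : PtopCut n = topCutOfCells n '' patterns n 0 0 1 := by
  ext p
  constructor
  · rintro ⟨r, c, heven, hle, rfl⟩
    obtain ⟨j, rfl⟩ : 2 ∣ c := Nat.dvd_of_mod_eq_zero heven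
    obtain ⟨i, rfl⟩ : ∃ i, r = i + j := ⟨r - j, by omega⟩
    have hlt : i + j + n < 2 ^ (i + j + n) := Nat.lt_two_pow_self
    have hpos : IsPosition n i j (2 ^ (i + j + n) - (i + j + n)) := ⟨i + j + n, by omega⟩
    exact ⟨_, ⟨_, _, _, hpos, rfl⟩, (topCutPattern_eq_topCutOfCells hpos).symm⟩
  · rintro ⟨_, ⟨i, j, k, hpos, rfl⟩, rfl⟩
    exact ⟨i + j, 2 * j, by omega, by omega, (topCutPattern_eq_topCutOfCells hpos).symm⟩

theorem ncard_ptopCut (n : ℕ) : (PtopCut n).ncard = (patterns n 0 0 1).ncard := by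
  rw [ptopCut_eq_image]
  exact ((topCutOfCells_injOn n).mono fun _ hS => subset_region_of_mem_patterns hS).ncard_image

theorem ptopCut_finite (n : ℕ) : (PtopCut n).Finite := by
  rw [ptopCut_eq_image]
  exact (patterns_finite n 0 0 1).image _

end TopCut

end Sierpinski

theorem sierpinski_topcut_count (n : ℕ) (hn : 2 ≤ n) :
    (PtopCut n).Finite ∧ ((PtopCut n).ncard : ℤ) = 4 * (n : ℤ) ^ 2 - 10 * n + 8 := by
  refine ⟨Sierpinski.ptopCut_finite n, ?_⟩
  have hcount := Sierpinski.ncard_patterns hn zero_le_one zero_le_one le_rfl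
    (g := 2 * n - 1) (by simp) (by omega)
  rw [Sierpinski.ncard_ptopCut, hcount]
  ring
end
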